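/- For every m ≥ 0 there exists a constant C > 0 such that for every multi-index α ∈ ℕ³ with |α| ≤ 8 and all functions f, g : ℝ³ × 𝕋³ → ℝ smooth in the x-variable (with all the norms appearing below finite): ‖⟨v⟩^m ∂ₓ^α Q(f,g)‖_{L¹(ℝ³×𝕋³)} ≤ C Σ_{|β₁|≤8, |β₂|≤8} [ ‖⟨v⟩^{m+1} ∂ₓ^{β₁} f‖_{L¹(ℝ³×𝕋³)} ‖∂ₓ^{β₂} g‖_{L¹(ℝ³×𝕋³)} + ‖⟨v⟩^{m+1} ∂ₓ^{β₁} g‖_{L¹(ℝ³×𝕋³)} ‖∂ₓ^{β₂} f‖_{L¹(ℝ³×𝕋³)} ]. -/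

import Mathlib

open MeasureTheory Real Filter
open scoped InnerProductSpace
noncomputable section

/-- `ℝ³` as a Euclidean space. -/
abbrev V : Type := EuclideanSpace ℝ (Fin 3)

/-- The unit sphere `S² ⊂ ℝ³`. -/
abbrev S2 : Type := Metric.sphere (0 : V) 1

/-- The surface measure on `S²`. -/
noncomputable def σS : Measure S2 := (volume : Measure V).toSphere

/-- The Japanese bracket `⟨v⟩ = (1+|v|²)^{1/2}`. -/
noncomputable def jap (v : V) : ℝ := Real.sqrt (1 + ‖v‖ ^ 2)

/-- A fundamental domain for the torus `𝕋³ = ℝ³/(2πℤ)³`. -/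
def box : Set V := {x | ∀ i : Fin 3, x i ∈ Set.Ico (0 : ℝ) (2 * π)}

/-- The standard basis vectors of `ℝ³`. -/
noncomputable def eV (i : Fin 3) : V := EuclideanSpace.single i (1 : ℝ)

/-- The `i`-th partial derivative in the `x` variable. -/
noncomputable def pdX (i : Fin 3) (f : V → V → ℝ) : V → V → ℝ :=
  fun v x => fderiv ℝ (f v) x (eV i)

/-- The iterated `x`-derivative `∂ₓ^α`. -/
noncomputable def pdA (α : Fin 3 → ℕ) (f : V → V → ℝ) : V → V → ℝ :=
  (pdX 0)^[α 0] ((pdX 1)^[α 1] ((pdX 2)^[α 2] f))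

/-- `2π`-periodicity in the `x` variable (i.e. being a function on `ℝ³ × 𝕋³`). -/
def PeriodicX (f : V → V → ℝ) : Prop :=
  ∀ v x (i : Fin 3), f v (x + (2 * π) • eV i) = f v x

/-- Sum of `F α` over all multi-indices `α` with `|α| ≤ N`. -/
noncomputable def msum (N : ℕ) (F : (Fin 3 → ℕ) → ℝ) : ℝ :=
  ∑ α : Fin 3 → Fin (N + 1),
    if (α 0 : ℕ) + (α 1 : ℕ) + (α 2 : ℕ) ≤ N then F (fun i => (α i : ℕ)) else 0

/-- The hard-sphere collision operator `Q(f,g)`. -/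
noncomputable def Qop (f g : V → ℝ) (v : V) : ℝ :=
  ∫ u : V, ∫ ω : S2, |⟪u - v, (ω : V)⟫_ℝ| *
    (f (u - ⟪u - v, (ω : V)⟫_ℝ • (ω : V)) * g (v + ⟪u - v, (ω : V)⟫_ℝ • (ω : V))
      - f u * g v) ∂σS

/-- `Q` acting in the `v` variable for each fixed `x`. -/
noncomputable def QopX (f g : V → V → ℝ) (v x : V) : ℝ :=
  Qop (fun u => f u x) (fun u => g u x) v

/-- `ν₀(v) = ∫ r₀(u,v) du`. -/
noncomputable def nu0 (r₀ : V → V → ℝ) (v : V) : ℝ := ∫ u : V, r₀ u v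

/-- `(K₀ f)(v) = ∫ r₀(v,u) f(u) du`. -/
noncomputable def K0 (r₀ : V → V → ℝ) (f : V → ℝ) (v : V) : ℝ := ∫ u : V, r₀ v u * f u

/-- `K₀` acting in the `v` variable for each fixed `x`. -/
noncomputable def K0X (r₀ : V → V → ℝ) (f : V → V → ℝ) (v x : V) : ℝ :=
  K0 r₀ (fun u => f u x) v

/-- `ν₁(v) = ∫∫ |(u−v)·ω| e^{−|u|²} du dω`. -/
noncomputable def nu1 (v : V) : ℝ :=
  ∫ u : V, ∫ ω : S2, |⟪u - v, (ω : V)⟫_ℝ| * Real.exp (-‖u‖ ^ 2) ∂σS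

/-- Glassey's explicit form of `K₁`. -/
noncomputable def K1 (f : V → ℝ) (v : V) : ℝ :=
  2 * π * ∫ u : V, ‖u - v‖⁻¹ * Real.exp (-(⟪u - v, v⟫_ℝ ^ 2 / ‖u - v‖ ^ 2)) * f u
    - π * ∫ u : V, ‖u - v‖ * Real.exp (-‖v‖ ^ 2) * f u

/-- `K₁` acting in the `v` variable for each fixed `x`. -/
noncomputable def K1X (f : V → V → ℝ) (v x : V) : ℝ := K1 (fun u => f u x) v

/-- Pointwise two-sided bound `C⁻¹ e^{−|u|²}⟨u−v⟩ ≤ r₀(u,v) ≤ C e^{−|u|²}⟨u−v⟩`. -/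
def R0Bounds (r₀ : V → V → ℝ) (C : ℝ) : Prop :=
  ∀ u v : V, C⁻¹ * (Real.exp (-‖u‖ ^ 2) * jap (u - v)) ≤ r₀ u v ∧
    r₀ u v ≤ C * (Real.exp (-‖u‖ ^ 2) * jap (u - v))

/-- Detailed balance: `r₀(u,v) = r₀(v,u) e^{|v|²−|u|²}`. -/
def R0DetailedBalance (r₀ : V → V → ℝ) : Prop :=
  ∀ u v : V, r₀ u v = r₀ v u * Real.exp (‖v‖ ^ 2 - ‖u‖ ^ 2)

/-- The bounds `|∂ᵤᵏ∂ᵥˡ r₀(u,v)| ≤ C₂ e^{−|u|²/2} ⟨u−v⟩^{1−l}` for `k+l ≤ 1`. -/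
def R0DerivBounds (r₀ : V → V → ℝ) (C₂ : ℝ) : Prop :=
  ∀ u v : V,
    |r₀ u v| ≤ C₂ * (Real.exp (-‖u‖ ^ 2 / 2) * jap (u - v)) ∧
    ‖fderiv ℝ (fun u' => r₀ u' v) u‖ ≤ C₂ * (Real.exp (-‖u‖ ^ 2 / 2) * jap (u - v)) ∧
    ‖fderiv ℝ (fun v' => r₀ u v') v‖ ≤ C₂ * Real.exp (-‖u‖ ^ 2 / 2)

/-!
For fixed `(v, u, ω)` the integrand of `Q(f, g)` is `|(u - v) · ω|` times a difference of two
products of smooth functions of `x`. Two facts bound its `x`-derivatives. By the Leibniz rule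
(`leib_DA`) a derivative of order at most eight of a product is a sum of at most `2^8` products in
which one factor carries at most five derivatives; this factor is bounded in `L^∞` by the
`L¹` norms of three more derivatives, one in each variable (`sobolev`). Hence the norms
`∑_{|β| ≤ 8} ‖∂^β h‖_{L¹}` satisfy an algebra inequality (`DA_mul_le`). Next, the collision map
`(v, u, ω) ↦ (v', u', ω)` is, for fixed `ω`, a linear involution, so it preserves `dv du dω`
(`T_mp`), and it preserves the energy and the kernel `|(u - v) · ω|`. Therefore
`⟨v⟩^m |(u - v) · ω|` is bounded by a multiple of `⟨u⟩^(m+1) + ⟨v⟩^(m+1)` and also of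
`⟨u'⟩^(m+1) + ⟨v'⟩^(m+1)`, and the change of variables reduces the gain term to the loss term,
whose integral factorizes (`gain_loss`).

It remains to pass the derivative under the integral. Since nothing is assumed on the regularity
of `Q(f, g)`, its derivative as computed by `fderiv` is `0` wherever `Q(f, g)` fails to be
differentiable, and these zeros are differentiated again in higher derivatives. What survives is that, for
almost every `v` and `x`, the iterated derivative is either `0` or the integral of the iterated
derivatives of the integrand (`step_box`). This is proved on lines: along almost every line the
parameter integral is absolutely continuous, with the expected derivative at almost every point
by Lebesgue's theorem, and if a function takes almost everywhere one of the values `0` and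
`b t`, then wherever it is differentiable its derivative is `0` or that of `b`
(`deriv_dichotomy`). Either alternative is dominated by the integral of the absolute values, which
the first part controls.
-/

/-! ### Iterated partial derivatives of smooth functions -/

/-- The directional derivative `∂ᵢ h` of a function on `ℝ³`; by definition `pdX i f v = D i (f v)`. -/
def D (i : Fin 3) (h : V → ℝ) : V → ℝ := fun x => fderiv ℝ h x (eV i)

/-- The iterated derivative `∂^α h`; by definition `pdA α f v = DA α (f v)`. -/
def DA (α : Fin 3 → ℕ) (h : V → ℝ) : V → ℝ :=
  (D 0)^[α 0] ((D 1)^[α 1] ((D 2)^[α 2] h))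

/-- Smoothness on `ℝ³`. -/
def Sm (h : V → ℝ) : Prop := ContDiff ℝ (⊤ : ℕ∞) h

lemma pdX_iter (i : Fin 3) (n : ℕ) (f : V → V → ℝ) (v : V) :
    ((pdX i)^[n] f) v = (D i)^[n] (f v) := by
  induction n with
  | zero => rfl
  | succ n ih => rw [Function.iterate_succ_apply', Function.iterate_succ_apply', ← ih]; rfl

lemma pdA_eq (α : Fin 3 → ℕ) (f : V → V → ℝ) (v : V) : pdA α f v = DA α (f v) := by
  simp only [pdA, DA, pdX_iter]

lemma Sm.diff {h : V → ℝ} (hh : Sm h) : Differentiable ℝ h :=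
  ContDiff.differentiable hh (by simp)

lemma Sm.D {h : V → ℝ} (hh : Sm h) (i : Fin 3) : Sm (D i h) := by
  have : ContDiff ℝ (⊤ : ℕ∞) (fderiv ℝ h) := ContDiff.fderiv_right hh (by simp)
  exact this.clm_apply contDiff_const

lemma Sm.iter {h : V → ℝ} (hh : Sm h) (i : Fin 3) (n : ℕ) : Sm ((_root_.D i)^[n] h) := by
  induction n with
  | zero => exact hh
  | succ n ih => rw [Function.iterate_succ_apply']; exact ih.D i

lemma Sm.DA {h : V → ℝ} (hh : Sm h) (α : Fin 3 → ℕ) : Sm (DA α h) :=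
  ((hh.iter 2 _).iter 1 _).iter 0 _

lemma Sm.cont {h : V → ℝ} (hh : Sm h) : Continuous h := hh.diff.continuous

lemma Sm.mul {a b : V → ℝ} (ha : Sm a) (hb : Sm b) : Sm (fun x => a x * b x) :=
  ContDiff.mul ha hb

lemma D_add {a b : V → ℝ} (ha : Sm a) (hb : Sm b) (i : Fin 3) :
    D i (fun x => a x + b x) = fun x => D i a x + D i b x := by
  funext x
  simp only [D]
  rw [fderiv_fun_add (ha.diff x) (hb.diff x)]; rfl

lemma D_sub {a b : V → ℝ} (ha : Sm a) (hb : Sm b) (i : Fin 3) :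
    D i (fun x => a x - b x) = fun x => D i a x - D i b x := by
  funext x
  simp only [D]
  rw [fderiv_fun_sub (ha.diff x) (hb.diff x)]; rfl

lemma D_cmul {a : V → ℝ} (ha : Sm a) (c : ℝ) (i : Fin 3) :
    D i (fun x => c * a x) = fun x => c * D i a x := by
  funext x
  simp only [D]
  rw [fderiv_const_mul (ha.diff x)]; rfl

lemma D_mul {a b : V → ℝ} (ha : Sm a) (hb : Sm b) (i : Fin 3) :
    D i (fun x => a x * b x) = fun x => D i a x * b x + a x * D i b x := by
  funext x
  simp only [D]
  rw [fderiv_fun_mul (ha.diff x) (hb.diff x)]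
  simp; ring

lemma iter_sub {a b : V → ℝ} (ha : Sm a) (hb : Sm b) (i : Fin 3) (n : ℕ) :
    (D i)^[n] (fun x => a x - b x) = fun x => (D i)^[n] a x - (D i)^[n] b x := by
  induction n with
  | zero => rfl
  | succ n ih => simp only [Function.iterate_succ_apply', ih, D_sub (ha.iter i n) (hb.iter i n)]

lemma iter_cmul {a : V → ℝ} (ha : Sm a) (c : ℝ) (i : Fin 3) (n : ℕ) :
    (D i)^[n] (fun x => c * a x) = fun x => c * (D i)^[n] a x := by
  induction n with
  | zero => rfl
  | succ n ih => simp only [Function.iterate_succ_apply', ih, D_cmul (ha.iter i n)]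

lemma DA_sub {a b : V → ℝ} (ha : Sm a) (hb : Sm b) (α : Fin 3 → ℕ) :
    DA α (fun x => a x - b x) = fun x => DA α a x - DA α b x := by
  simp only [DA, iter_sub ha hb, iter_sub (ha.iter 2 _) (hb.iter 2 _),
    iter_sub ((ha.iter 2 _).iter 1 _) ((hb.iter 2 _).iter 1 _)]

lemma DA_cmul {a : V → ℝ} (ha : Sm a) (c : ℝ) (α : Fin 3 → ℕ) :
    DA α (fun x => c * a x) = fun x => c * DA α a x := by
  simp only [DA, iter_cmul ha, iter_cmul (ha.iter 2 _), iter_cmul ((ha.iter 2 _).iter 1 _)]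

lemma D_comm {h : V → ℝ} (hh : Sm h) (i j : Fin 3) : D i (D j h) = D j (D i h) := by
  funext x
  have h2 : ContDiff ℝ (⊤ : ℕ∞) (fderiv ℝ h) := ContDiff.fderiv_right hh (by simp)
  have hd : DifferentiableAt ℝ (fderiv ℝ h) x := h2.differentiable (by simp) x
  have key : ∀ k l : Fin 3, D k (D l h) x = fderiv ℝ (fderiv ℝ h) x (eV k) (eV l) := by
    intro k l
    change fderiv ℝ (fun y => fderiv ℝ h y (eV l)) x (eV k) = _
    rw [fderiv_clm_apply hd (differentiableAt_const _)]
    simp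
  rw [key, key]
  have hs : IsSymmSndFDerivAt ℝ h x :=
    ContDiffAt.isSymmSndFDerivAt (n := (⊤ : ℕ∞)) (ContDiff.contDiffAt hh) (by
      simp only [minSmoothness_of_isRCLikeNormedField]; exact WithTop.coe_le_coe.2 le_top)
  exact hs _ _

lemma D_iter_comm {h : V → ℝ} (hh : Sm h) (i j : Fin 3) (n : ℕ) :
    D i ((D j)^[n] h) = (D j)^[n] (D i h) := by
  induction n with
  | zero => rfl
  | succ n ih => rw [Function.iterate_succ_apply', Function.iterate_succ_apply',
      D_comm (hh.iter j n), ih]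

/-- The multi-index `β + eᵢ`. -/
def bump (i : Fin 3) (β : Fin 3 → ℕ) : Fin 3 → ℕ := Function.update β i (β i + 1)

lemma bump_sum (i : Fin 3) (β : Fin 3 → ℕ) :
    bump i β 0 + bump i β 1 + bump i β 2 = β 0 + β 1 + β 2 + 1 := by
  fin_cases i <;> simp [bump, Function.update] <;> omega

lemma D_DA {h : V → ℝ} (hh : Sm h) (i : Fin 3) (β : Fin 3 → ℕ) :
    D i (DA β h) = DA (bump i β) h := by
  fin_cases i
  · simp [DA, bump, Function.update, Function.iterate_succ_apply']
  · simp [DA, bump, Function.update, Function.iterate_succ_apply']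
    rw [D_iter_comm ((hh.iter 2 _).iter 1 _)]
  · simp [DA, bump, Function.update, Function.iterate_succ_apply']
    rw [D_iter_comm ((hh.iter 2 _).iter 1 _), D_iter_comm (hh.iter 2 _)]

/-- The product structure of a differential operator `T` of order `N` given by the Leibniz rule:
`T (a b)` is a sum of `2 ^ N` products (with repetitions) of derivatives of total order `N`. -/
def Leib (T : (V → ℝ) → V → ℝ) (N : ℕ) : Prop :=
  ∃ L : List ((Fin 3 → ℕ) × (Fin 3 → ℕ)), L.length = 2 ^ N ∧
    (∀ p ∈ L, p.1 0 + p.1 1 + p.1 2 + (p.2 0 + p.2 1 + p.2 2) = N) ∧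
    ∀ a b : V → ℝ, Sm a → Sm b →
      T (fun x => a x * b x) = fun x => (L.map (fun p => DA p.1 a x * DA p.2 b x)).sum

lemma sm_list_sum {a b : V → ℝ} (ha : Sm a) (hb : Sm b)
    (L : List ((Fin 3 → ℕ) × (Fin 3 → ℕ))) :
    Sm (fun x => (L.map (fun p => DA p.1 a x * DA p.2 b x)).sum) := by
  induction L with
  | nil => exact contDiff_const
  | cons p L ih =>
    simp only [List.map_cons, List.sum_cons]
    exact ContDiff.add ((ha.DA _).mul (hb.DA _)) ih

lemma D_list_sum {a b : V → ℝ} (ha : Sm a) (hb : Sm b) (i : Fin 3)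
    (L : List ((Fin 3 → ℕ) × (Fin 3 → ℕ))) :
    D i (fun x => (L.map (fun p => DA p.1 a x * DA p.2 b x)).sum) = fun x =>
      ((L.map (fun p => (bump i p.1, p.2)) ++ L.map (fun p => (p.1, bump i p.2))).map
        (fun p => DA p.1 a x * DA p.2 b x)).sum := by
  induction L with
  | nil => funext x; simp [D]
  | cons p L ih =>
    simp only [List.map_cons, List.sum_cons]
    rw [D_add ((ha.DA _).mul (hb.DA _)) (sm_list_sum ha hb L), ih,
      D_mul (ha.DA _) (hb.DA _), D_DA ha, D_DA hb]
    funext x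
    simp only [List.map_append, List.map_map, List.sum_append, List.cons_append, List.map_cons,
      List.sum_cons]
    ring

lemma Leib.D {T : (V → ℝ) → V → ℝ} {N : ℕ} (hT : Leib T N) (i : Fin 3) :
    Leib (fun h => D i (T h)) (N + 1) := by
  obtain ⟨L, h1, h2, h3⟩ := hT
  refine ⟨L.map (fun p => (bump i p.1, p.2)) ++ L.map (fun p => (p.1, bump i p.2)), ?_, ?_, ?_⟩
  · simp [h1, pow_succ]; ring
  · intro p hp
    simp only [List.mem_append, List.mem_map] at hp
    rcases hp with ⟨q, hq, rfl⟩ | ⟨q, hq, rfl⟩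
    · have := h2 q hq
      have := bump_sum i q.1
      simp only; omega
    · have := h2 q hq
      have := bump_sum i q.2
      simp only; omega
  · intro a b ha hb
    simp only [h3 a b ha hb]
    exact D_list_sum ha hb i L

lemma Leib.iter {T : (V → ℝ) → V → ℝ} {N : ℕ} (hT : Leib T N) (i : Fin 3) (n : ℕ) :
    Leib (fun h => (_root_.D i)^[n] (T h)) (N + n) := by
  induction n with
  | zero => exact hT
  | succ n ih => simp only [Function.iterate_succ_apply']; exact ih.D i

lemma leib_DA (α : Fin 3 → ℕ) : Leib (DA α) (α 0 + α 1 + α 2) := by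
  have h0 : Leib (fun h => h) 0 := by
    refine ⟨[(0, 0)], rfl, by simp, ?_⟩
    intro a b _ _
    simp [DA]
  have := ((h0.iter 2 (α 2)).iter 1 (α 1)).iter 0 (α 0)
  rw [show α 0 + α 1 + α 2 = 0 + α 2 + α 1 + α 0 by ring]
  exact this

/-! ### A Sobolev embedding on the box -/

/-- The period interval `[0, 2π)`. -/
def I0 : Set ℝ := Set.Ico 0 (2 * π)

lemma two_pi_ge_one : (1 : ℝ) ≤ 2 * π := by linarith [Real.pi_gt_three]

/-- Averaging `φ t = φ s + ∫ₛᵗ φ'` over `s` gives the one-dimensional embedding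
`W^{1,1} ⊆ L^∞`; the constant only uses `1 ≤ 2π ≤ 7`. -/
lemma sob1 {φ φ' : ℝ → ℝ} (hd : ∀ s, HasDerivAt φ (φ' s) s) (hc : Continuous φ') {t : ℝ}
    (ht : t ∈ I0) : ‖φ t‖ₑ ≤ 7 * ∫⁻ s in I0, (‖φ s‖ₑ + ‖φ' s‖ₑ) := by
  have hφ : Continuous φ := continuous_iff_continuousAt.2 fun s => (hd s).continuousAt
  have hvol : volume I0 = ENNReal.ofReal (2 * π) := by simp [I0]
  have h1 : ∀ s ∈ I0, ‖φ t‖ₑ ≤ ‖φ s‖ₑ + ∫⁻ r in I0, ‖φ' r‖ₑ := by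
    intro s hs
    have e : φ t = φ s + ∫ r in s..t, φ' r := by
      rw [intervalIntegral.integral_eq_sub_of_hasDerivAt (fun r _ => hd r)
        (hc.intervalIntegrable _ _)]
      ring
    rw [e]
    refine (enorm_add_le _ _).trans (add_le_add le_rfl ?_)
    have : ‖∫ r in s..t, φ' r‖ₑ = ‖∫ r in Set.uIoc s t, φ' r‖ₑ := by
      rw [← ofReal_norm, ← ofReal_norm, intervalIntegral.norm_intervalIntegral_eq]
    rw [this]
    refine (enorm_integral_le_lintegral_enorm _).trans (lintegral_mono_set ?_)
    refine Set.uIoc_subset_uIcc.trans ?_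
    exact (Set.ordConnected_Ico).uIcc_subset hs ht
  have h2 : volume I0 * ‖φ t‖ₑ ≤ (∫⁻ s in I0, ‖φ s‖ₑ) + volume I0 * ∫⁻ r in I0, ‖φ' r‖ₑ := by
    calc volume I0 * ‖φ t‖ₑ = ∫⁻ s in I0, ‖φ t‖ₑ := by
            rw [setLIntegral_const, mul_comm]
      _ ≤ ∫⁻ s in I0, (‖φ s‖ₑ + ∫⁻ r in I0, ‖φ' r‖ₑ) :=
            setLIntegral_mono' measurableSet_Ico h1
      _ = _ := by
            rw [lintegral_add_left (by fun_prop), setLIntegral_const, mul_comm (volume I0)]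
  have hge : 1 ≤ volume I0 := by
    rw [hvol, ← ENNReal.ofReal_one]; exact ENNReal.ofReal_le_ofReal two_pi_ge_one
  have hle : volume I0 ≤ 7 := by
    rw [hvol, show (7 : ENNReal) = ENNReal.ofReal 7 by simp]
    exact ENNReal.ofReal_le_ofReal (by linarith [Real.pi_lt_d2])
  calc ‖φ t‖ₑ = 1 * ‖φ t‖ₑ := (one_mul _).symm
    _ ≤ volume I0 * ‖φ t‖ₑ := by gcongr
    _ ≤ _ := h2
    _ ≤ 7 * (∫⁻ s in I0, ‖φ s‖ₑ) + 7 * ∫⁻ r in I0, ‖φ' r‖ₑ := by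
        gcongr
        exact le_mul_of_one_le_left zero_le (by norm_num)
    _ = _ := by rw [lintegral_add_left (by fun_prop), mul_add]

lemma toLp_update (x : Fin 3 → ℝ) (i : Fin 3) (s : ℝ) :
    (WithLp.toLp 2 (Function.update x i s) : V) = WithLp.toLp 2 x + (s - x i) • eV i := by
  ext j
  by_cases h : j = i
  · subst h; simp [eV]
  · simp [eV, h]

lemma cont_update (i : Fin 3) (x : Fin 3 → ℝ) :
    Continuous (fun s : ℝ => (WithLp.toLp 2 (Function.update x i s) : V)) := by
  simp only [toLp_update]; fun_prop

lemma sob_dir {h : V → ℝ} (hh : Sm h) (i : Fin 3) {x : Fin 3 → ℝ} (hx : x i ∈ I0) :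
    ‖h (WithLp.toLp 2 x)‖ₑ ≤ 7 * ∫⁻ s in I0, (‖h (WithLp.toLp 2 (Function.update x i s))‖ₑ
      + ‖D i h (WithLp.toLp 2 (Function.update x i s))‖ₑ) := by
  have := sob1 (φ := fun s => h (WithLp.toLp 2 (Function.update x i s)))
    (φ' := fun s => D i h (WithLp.toLp 2 (Function.update x i s))) ?_ ?_ hx
  · simpa using this
  · intro s
    have h1 : HasDerivAt (fun s : ℝ => (WithLp.toLp 2 (Function.update x i s) : V)) (eV i) s := by
      simp only [toLp_update]
      simpa using ((((hasDerivAt_id s).sub_const (x i)).smul_const (eV i))).const_add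
        (WithLp.toLp 2 x : V)
    exact (hh.diff _).hasFDerivAt.comp_hasDerivAt s h1
  · exact (hh.D i).cont.comp (cont_update i x)

/-- The sum of `|h|` over a list of functions `h`, in Cartesian coordinates. -/
def NL (l : List (V → ℝ)) (x : Fin 3 → ℝ) : ENNReal :=
  (l.map (fun h => ‖h (WithLp.toLp 2 x)‖ₑ)).sum

lemma NL_append (l l' : List (V → ℝ)) (x : Fin 3 → ℝ) : NL (l ++ l') x = NL l x + NL l' x := by
  simp [NL]

lemma NL_meas {l : List (V → ℝ)} (hl : ∀ h ∈ l, Sm h) : Measurable (NL l) := by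
  induction l with
  | nil => exact measurable_const
  | cons h l ih =>
    have h1 : NL (h :: l) = fun x => ‖h (WithLp.toLp 2 x)‖ₑ + NL l x := by
      funext x; simp [NL]
    rw [h1]
    refine Measurable.add ?_ (ih fun k hk => hl k (List.mem_cons_of_mem _ hk))
    have := (hl h List.mem_cons_self).cont
    have h2 : Measurable (fun x : Fin 3 → ℝ => h (WithLp.toLp 2 x)) :=
      this.measurable.comp (by fun_prop)
    exact h2.enorm

lemma sob_step {l : List (V → ℝ)} (hl : ∀ h ∈ l, Sm h) (i : Fin 3) {x : Fin 3 → ℝ}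
    (hx : x i ∈ I0) :
    NL l x ≤ 7 * ∫⁻ s in I0, NL (l ++ l.map (D i)) (Function.update x i s) := by
  induction l with
  | nil => simp [NL]
  | cons h l ih =>
    have hh := hl h List.mem_cons_self
    have hl' : ∀ k ∈ l, Sm k := fun k hk => hl k (List.mem_cons_of_mem _ hk)
    have e : NL (h :: l) x = ‖h (WithLp.toLp 2 x)‖ₑ + NL l x := by simp [NL]
    have e2 : ∀ y, NL (h :: l ++ (h :: l).map (D i)) y =
        (‖h (WithLp.toLp 2 y)‖ₑ + ‖D i h (WithLp.toLp 2 y)‖ₑ) + NL (l ++ l.map (D i)) y := by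
      intro y; simp [NL]; ring
    simp only [e, e2]
    rw [lintegral_add_left, mul_add]
    · exact add_le_add (sob_dir hh i hx) (ih hl')
    · have h1 : Measurable (fun s => h (WithLp.toLp 2 (Function.update x i s))) :=
        (hh.cont.comp (cont_update i x)).measurable
      have h2 : Measurable (fun s => D i h (WithLp.toLp 2 (Function.update x i s))) :=
        ((hh.D i).cont.comp (cont_update i x)).measurable
      exact h1.enorm.add h2.enorm

lemma box_eq : box = (WithLp.ofLp : V → Fin 3 → ℝ) ⁻¹' (Set.univ.pi fun _ => I0) := by
  ext x; simp [box, I0]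

lemma box_meas : MeasurableSet box := by
  rw [box_eq]
  exact (PiLp.volume_preserving_ofLp (Fin 3)).measurable
    (MeasurableSet.univ_pi fun _ => measurableSet_Ico)

lemma lintegral_box {G : (Fin 3 → ℝ) → ENNReal} (hG : Measurable G) (x : Fin 3 → ℝ) :
    ∫⁻ y in box, G (WithLp.ofLp y) = ∫⁻ s in I0, ∫⁻ t in I0, ∫⁻ r in I0,
      G (Function.update (Function.update (Function.update x 0 s) 1 t) 2 r) := by
  have h1 : ∫⁻ y in box, G (WithLp.ofLp y) =
      ∫⁻ y, G y ∂(Measure.pi fun _ : Fin 3 => (volume : Measure ℝ).restrict I0) := by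
    rw [← Measure.restrict_pi_pi, box_eq]
    exact (PiLp.volume_preserving_ofLp (Fin 3)).setLIntegral_comp_preimage
      (MeasurableSet.univ_pi fun _ => measurableSet_Ico) hG
  have h2 := congrFun (lmarginal_univ
    (μ := fun _ : Fin 3 => (volume : Measure ℝ).restrict I0) (f := G)) x
  rw [h1, ← h2, show (Finset.univ : Finset (Fin 3)) = insert 0 (insert 1 {2}) by decide,
    lmarginal_insert _ hG (by decide)]
  refine lintegral_congr fun s => ?_
  rw [lmarginal_insert _ hG (by decide)]
  refine lintegral_congr fun t => ?_
  rw [lmarginal_singleton]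

/-- The list `h, D₀h, D₁h, D₁D₀h, …` of the eight derivatives controlling `sup |h|`. -/
def L3 (h : V → ℝ) : List (V → ℝ) :=
  (([h] ++ [h].map (D 0)) ++ ([h] ++ [h].map (D 0)).map (D 1)) ++
    (([h] ++ [h].map (D 0)) ++ ([h] ++ [h].map (D 0)).map (D 1)).map (D 2)

lemma map_sm {l : List (V → ℝ)} (hl : ∀ h ∈ l, Sm h) (i : Fin 3) :
    ∀ h ∈ l ++ l.map (D i), Sm h := by
  intro h hh
  rcases List.mem_append.1 hh with h1 | h1
  · exact hl h h1
  · obtain ⟨k, hk, rfl⟩ := List.mem_map.1 h1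
    exact (hl k hk).D i

lemma sobolev {h : V → ℝ} (hh : Sm h) {x : V} (hx : x ∈ box) :
    ‖h x‖ₑ ≤ 343 * ∫⁻ y in box, NL (L3 h) (WithLp.ofLp y) := by
  have s1 : ∀ k ∈ [h], Sm k := by simpa using hh
  have s2 := map_sm s1 0
  have s3 := map_sm s2 1
  have s4 := map_sm s3 2
  have hx' : ∀ i, WithLp.ofLp x i ∈ I0 := hx
  have s4' : ∀ k ∈ L3 h, Sm k := s4
  rw [lintegral_box (NL_meas s4') (WithLp.ofLp x)]
  have e : ‖h x‖ₑ = NL [h] (WithLp.ofLp x) := by simp [NL]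
  rw [e]
  have hI : MeasurableSet I0 := measurableSet_Ico
  calc _ ≤ _ := sob_step s1 0 (hx' 0)
    _ ≤ 7 * ∫⁻ s in I0, 7 * ∫⁻ t in I0, 7 * ∫⁻ r in I0, NL (L3 h)
        (Function.update (Function.update (Function.update (WithLp.ofLp x) 0 s) 1 t) 2 r) := by
      gcongr with s
      refine (sob_step s2 1 (by simpa using hx' 1)).trans ?_
      gcongr with t
      exact sob_step s3 2 (by simpa using hx' 2)
    _ = _ := by
      have h7 : (7 : ENNReal) ≠ ⊤ := by simp
      simp only [lintegral_const_mul' _ _ h7]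
      rw [← mul_assoc, ← mul_assoc]
      norm_num

/-- The unweighted norm `∑_{|β| ≤ 8} ‖∂^β h‖_{L¹(box)}`. -/
def NF (h : V → ℝ) : ENNReal :=
  ∑ β : Fin 3 → Fin 9, if (β 0 : ℕ) + (β 1 : ℕ) + (β 2 : ℕ) ≤ 8 then
    ∫⁻ x in box, ‖DA (fun i => (β i : ℕ)) h x‖ₑ else 0

lemma le_NF (h : V → ℝ) {β : Fin 3 → ℕ} (hβ : β 0 + β 1 + β 2 ≤ 8) :
    ∫⁻ x in box, ‖DA β h x‖ₑ ≤ NF h := by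
  have hlt : ∀ i, β i < 9 := by intro i; fin_cases i <;> simp <;> omega
  have := Finset.single_le_sum (f := fun β : Fin 3 → Fin 9 =>
    if (β 0 : ℕ) + (β 1 : ℕ) + (β 2 : ℕ) ≤ 8 then
    ∫⁻ x in box, ‖DA (fun i => (β i : ℕ)) h x‖ₑ else 0) (fun _ _ => zero_le)
    (Finset.mem_univ (fun i => (⟨β i, hlt i⟩ : Fin 9)))
  simp only [hβ, if_true] at this
  exact this

lemma sup_le_NF {h : V → ℝ} (hh : Sm h) {β : Fin 3 → ℕ} (hβ : β 0 + β 1 + β 2 ≤ 5)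
    {x : V} (hx : x ∈ box) : ‖DA β h x‖ₑ ≤ 2744 * NF h := by
  refine (sobolev (hh.DA β) hx).trans ?_
  have hc : ∀ β' : Fin 3 → ℕ, Measurable (fun y => ‖DA β' h y‖ₑ) := fun β' =>
    (hh.DA β').cont.measurable.enorm
  have e : ∀ y : V, NL (L3 (DA β h)) (WithLp.ofLp y) =
      ((L3 (DA β h)).map (fun k => ‖k y‖ₑ)).sum := fun y => by simp [NL]
  simp only [e]
  simp only [L3, List.map_cons, List.map_nil, List.cons_append,
    List.nil_append, D_DA hh, List.sum_cons, List.sum_nil]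
  have b := fun i β => bump_sum i β
  repeat rw [lintegral_add_left (hc _)]
  have key : ∀ β' : Fin 3 → ℕ, β' 0 + β' 1 + β' 2 ≤ 8 → 
    ∫⁻ x in box, ‖DA β' h x‖ₑ ≤ NF h := fun β' => le_NF h
  calc _ ≤ 343 * (NF h + (NF h + (NF h + (NF h + (NF h + (NF h + (NF h + (NF h + 0)))))))) := by
        gcongr <;> first | (apply key; (try simp only [b]); omega) | simp
    _ = _ := by ring

/-- For derivatives of total order at most eight, one factor has order at most five and is put
in `L^∞` by the Sobolev embedding, at the cost of three more derivatives. -/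
lemma prod_le_NF {a b : V → ℝ} (ha : Sm a) (hb : Sm b) {β β' : Fin 3 → ℕ}
    (h : β 0 + β 1 + β 2 + (β' 0 + β' 1 + β' 2) ≤ 8) :
    ∫⁻ x in box, ‖DA β a x‖ₑ * ‖DA β' b x‖ₑ ≤ 2744 * (NF a * NF b) := by
  have hma := (ha.DA β).cont.measurable.enorm
  have hmb := (hb.DA β').cont.measurable.enorm
  by_cases h5 : β 0 + β 1 + β 2 ≤ 5
  · calc _ ≤ ∫⁻ x in box, (2744 * NF a) * ‖DA β' b x‖ₑ := by
          refine setLIntegral_mono' box_meas fun x hx => ?_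
          gcongr
          exact sup_le_NF ha h5 hx
      _ = (2744 * NF a) * ∫⁻ x in box, ‖DA β' b x‖ₑ := lintegral_const_mul _ hmb
      _ ≤ (2744 * NF a) * NF b := by gcongr; exact le_NF b (by omega)
      _ = _ := by ring
  · calc _ ≤ ∫⁻ x in box, ‖DA β a x‖ₑ * (2744 * NF b) := by
          refine setLIntegral_mono' box_meas fun x hx => ?_
          gcongr
          exact sup_le_NF hb (by omega) hx
      _ = (∫⁻ x in box, ‖DA β a x‖ₑ) * (2744 * NF b) := lintegral_mul_const _ hma
      _ ≤ NF a * (2744 * NF b) := by gcongr; exact le_NF a (by omega)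
      _ = _ := by ring

/-- The `L¹` norms of derivatives of order at most eight form an algebra norm:
`‖∂^α (a b)‖_{L¹} ≤ C (∑_β ‖∂^β a‖_{L¹}) (∑_β ‖∂^β b‖_{L¹})`. The constant is `2^8 · 2744`, the
Leibniz rule producing at most `2^8` products. -/
lemma DA_mul_le {a b : V → ℝ} (ha : Sm a) (hb : Sm b) {α : Fin 3 → ℕ}
    (hα : α 0 + α 1 + α 2 ≤ 8) :
    ∫⁻ x in box, ‖DA α (fun x => a x * b x) x‖ₑ ≤ 702464 * (NF a * NF b) := by
  obtain ⟨L, h1, h2, h3⟩ := leib_DA α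
  rw [h3 a b ha hb]
  have key : ∀ L : List ((Fin 3 → ℕ) × (Fin 3 → ℕ)),
      (∀ p ∈ L, p.1 0 + p.1 1 + p.1 2 + (p.2 0 + p.2 1 + p.2 2) ≤ 8) →
      ∫⁻ x in box, ‖(L.map (fun p => DA p.1 a x * DA p.2 b x)).sum‖ₑ
        ≤ L.length * (2744 * (NF a * NF b)) := by
    intro L hL
    induction L with
    | nil => simp
    | cons p L ih =>
      have hm : Measurable (fun x => ‖DA p.1 a x‖ₑ * ‖DA p.2 b x‖ₑ) :=
        (ha.DA p.1).cont.measurable.enorm.mul (hb.DA p.2).cont.measurable.enorm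
      calc _ ≤ ∫⁻ x in box, (‖DA p.1 a x‖ₑ * ‖DA p.2 b x‖ₑ +
            ‖(L.map (fun p => DA p.1 a x * DA p.2 b x)).sum‖ₑ) := by
            refine lintegral_mono fun x => ?_
            simp only [List.map_cons, List.sum_cons]
            refine (enorm_add_le _ _).trans ?_
            rw [enorm_mul]
        _ ≤ 2744 * (NF a * NF b) + L.length * (2744 * (NF a * NF b)) := by
            rw [lintegral_add_left hm]
            exact add_le_add (prod_le_NF ha hb (hL p List.mem_cons_self))
              (ih fun q hq => hL q (List.mem_cons_of_mem _ hq))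
        _ = _ := by simp only [List.length_cons, Nat.cast_add, Nat.cast_one]; ring
  refine (key L fun p hp => (h2 p hp).le.trans hα).trans ?_
  rw [← mul_assoc]
  gcongr
  have : L.length ≤ 256 := by
    rw [h1]; exact (Nat.pow_le_pow_right (by norm_num) hα).trans (by norm_num)
  calc (L.length : ENNReal) * 2744 ≤ (256 : ℕ) * 2744 := by gcongr
    _ = _ := by norm_num

/-! ### Differentiation under the integral sign, up to zeros -/

/-- If `a` takes, almost everywhere near `t`, one of the two values `0` and `b`, then at a point
`t` of differentiability of both functions the derivative of `a` is `0` or that of `b`: otherwise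
`a` would differ from both `0` and `b` on a punctured neighbourhood of `t`. -/
lemma deriv_dichotomy {a b : ℝ → ℝ} {a' b' t : ℝ} {I : Set ℝ} (hI : I ∈ nhds t)
    (ha : HasDerivAt a a' t) (hb : HasDerivAt b b' t)
    (h : ∀ᵐ s, s ∈ I → a s = 0 ∨ a s = b s) : a' = 0 ∨ a' = b' := by
  by_contra! hn
  have h1 : ∀ᶠ s in nhdsWithin t {t}ᶜ, a s ≠ 0 := ha.eventually_ne hn.1
  have h2 : ∀ᶠ s in nhdsWithin t {t}ᶜ, (a - b) s ≠ 0 :=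
    (ha.sub hb).eventually_ne (sub_ne_zero.2 hn.2)
  have h3 : ∀ᶠ s in nhdsWithin t {t}ᶜ, s ∈ I := mem_nhdsWithin_of_mem_nhds hI
  have h4 : {s | a s ≠ 0 ∧ (a - b) s ≠ 0 ∧ s ∈ I} ∈ nhdsWithin t {t}ᶜ :=
    h1.and (h2.and h3)
  rw [mem_nhdsWithin] at h4
  obtain ⟨O, hO, htO, hsub⟩ := h4
  have hnull : volume (O ∩ {t}ᶜ) = 0 := by
    refine measure_mono_null ?_ (ae_iff.1 h)
    intro s hs
    obtain ⟨g1, g2, g3⟩ := hsub hs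
    simp only [Set.mem_ofPred_eq, Classical.not_imp, not_or]
    exact ⟨g3, g1, fun e => g2 (by simp [e])⟩
  have hO0 : volume O = 0 := by
    refine measure_mono_null (t := (O ∩ {t}ᶜ) ∪ {t}) ?_ (measure_union_null hnull (by simp))
    intro s hs
    by_cases e : s = t
    · exact Or.inr e
    · exact Or.inl ⟨hs, e⟩
  exact (hO.measure_pos volume ⟨t, htO⟩).ne' hO0

/-- Differentiation under the integral sign on an interval `I` of a line, for a function `a` that
is almost everywhere equal to `0` or to the parameter integral. -/
lemma line_step {Y : Type*} [MeasurableSpace Y] {μ : Measure Y} [SFinite μ] {I : Set ℝ}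
    (hI : IsOpen I) (hc : I.OrdConnected) {θ θ' : Y → ℝ → ℝ}
    (hd : ∀ y s, HasDerivAt (θ y) (θ' y s) s) (hcont : ∀ y, Continuous (θ' y))
    (hintg : ∀ n : ℕ, Integrable (fun p : ℝ × Y => I.indicator (θ' p.2) p.1)
      ((volume.restrict (Set.Icc (-(n : ℝ)) n)).prod μ))
    (h0 : ∀ᵐ t, t ∈ I → Integrable (fun y => θ y t) μ) {a : ℝ → ℝ}
    (ha : ∀ᵐ t, t ∈ I → a t = 0 ∨ a t = ∫ y, θ y t ∂μ) :
    ∀ᵐ t, t ∈ I → ∀ d, HasDerivAt a d t → d = 0 ∨ d = ∫ y, θ' y t ∂μ := by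
  rcases I.eq_empty_or_nonempty with rfl | hne
  · simp
  obtain ⟨t₀, ht₀, hi₀⟩ : ∃ t₀ ∈ I, Integrable (fun y => θ y t₀) μ := by
    by_contra! hcon
    refine (hI.measure_pos volume hne).ne' (measure_mono_null ?_ (ae_iff.1 h0))
    intro s hs
    simpa using ⟨hs, hcon s hs⟩
  set w : ℝ → ℝ := fun t => ∫ y, I.indicator (θ' y) t ∂μ with hw
  have hsubset : ∀ K : Set ℝ, Bornology.IsBounded K → ∃ n : ℕ, K ⊆ Set.Icc (-(n : ℝ)) n := by
    intro K hK
    obtain ⟨R, hR⟩ := hK.subset_closedBall 0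
    obtain ⟨n, hn⟩ := exists_nat_ge R
    refine ⟨n, fun s hs => ?_⟩
    have := hR hs
    rw [Metric.mem_closedBall, dist_zero_right, Real.norm_eq_abs] at this
    exact abs_le.1 (this.trans hn)
  have hwloc : LocallyIntegrable w volume := by
    rw [locallyIntegrable_iff]
    intro K hK
    obtain ⟨n, hn⟩ := hsubset K hK.isBounded
    exact (hintg n).integral_prod_left.mono_measure (Measure.restrict_mono hn le_rfl)
  have hH : ∀ t ∈ I, ∫ y, θ y t ∂μ = (∫ y, θ y t₀ ∂μ) + ∫ s in t₀..t, w s := by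
    intro t ht
    have hsub : Set.uIcc t₀ t ⊆ I := hc.uIcc_subset ht₀ ht
    have hsub' : Set.uIoc t₀ t ⊆ I := Set.uIoc_subset_uIcc.trans hsub
    obtain ⟨n, hn⟩ := hsubset (Set.uIoc t₀ t)
      ((isCompact_uIcc.isBounded).subset Set.uIoc_subset_uIcc)
    have hi : Integrable (fun p : ℝ × Y => I.indicator (θ' p.2) p.1)
        ((volume.restrict (Set.uIoc t₀ t)).prod μ) :=
      (hintg n).mono_measure (Measure.prod_mono (Measure.restrict_mono hn le_rfl) le_rfl)
    have e1 : ∀ y, θ y t = θ y t₀ + ∫ s in t₀..t, I.indicator (θ' y) s := by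
      intro y
      have : ∫ s in t₀..t, I.indicator (θ' y) s = ∫ s in t₀..t, θ' y s := by
        refine intervalIntegral.integral_congr fun s hs => ?_
        exact Set.indicator_of_mem (hsub hs) _
      rw [this, intervalIntegral.integral_eq_sub_of_hasDerivAt (fun r _ => hd y r)
        ((hcont y).intervalIntegrable _ _)]
      ring
    have e2 : ∫ s in t₀..t, w s = ∫ y, (∫ s in t₀..t, I.indicator (θ' y) s) ∂μ := by
      simp only [intervalIntegral.intervalIntegral_eq_integral_uIoc, hw]
      rw [integral_smul, integral_integral_swap (f := fun s y => I.indicator (θ' y) s) hi]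
    have hi2 : Integrable (fun y => ∫ s in t₀..t, I.indicator (θ' y) s) μ := by
      simp only [intervalIntegral.intervalIntegral_eq_integral_uIoc]
      exact hi.integral_prod_right.smul (if t₀ ≤ t then (1 : ℝ) else -1)
    rw [e2, ← integral_add hi₀ hi2]
    exact integral_congr_ae (Eventually.of_forall e1)
  filter_upwards [_root_.LocallyIntegrable.ae_hasDerivAt_integral hwloc] with t ht htI d hd'
  have hnhds : I ∈ nhds t := hI.mem_nhds htI
  have hH' : HasDerivAt (fun t => ∫ y, θ y t ∂μ) (∫ y, θ' y t ∂μ) t := by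
    have h1 := (ht t₀).const_add (∫ y, θ y t₀ ∂μ)
    have h2 : w t = ∫ y, θ' y t ∂μ := by
      simp only [hw]
      exact integral_congr_ae (Eventually.of_forall fun y => Set.indicator_of_mem htI _)
    rw [h2] at h1
    refine h1.congr_of_eventuallyEq ?_
    filter_upwards [hnhds] with s hs using hH s hs
  exact deriv_dichotomy hnhds hd' hH' ha

/-- Fubini along the lines `x + ℝ e`: the restriction of an integrable function to almost every
line is locally integrable. -/
lemma line_integrable {Y : Type*} [MeasurableSpace Y] {μ : Measure Y} [SFinite μ]
    {Ψ : V × Y → ℝ} (h : Integrable Ψ ((volume : Measure V).prod μ)) (e : V) :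
    ∀ᵐ x : V, ∀ n : ℕ, Integrable (fun p : ℝ × Y => Ψ (x + p.1 • e, p.2))
      ((volume.restrict (Set.Icc (-(n : ℝ)) n)).prod μ) := by
  rw [ae_all_iff]
  intro n
  set τ : Measure ℝ := volume.restrict (Set.Icc (-(n : ℝ)) n)
  have h1 : Integrable (fun q : ℝ × (V × Y) => Ψ q.2) (τ.prod ((volume : Measure V).prod μ)) :=
    h.comp_snd τ
  have hM : MeasurePreserving (fun q : ℝ × (V × Y) => (id q.1, ((q.2.1 + q.1 • e, q.2.2) : V × Y)))
      (τ.prod ((volume : Measure V).prod μ)) (τ.prod ((volume : Measure V).prod μ)) := by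
    refine MeasurePreserving.skew_product (g := fun (t : ℝ) (p : V × Y) => (p.1 + t • e, p.2))
      (MeasurePreserving.id τ) ?_ (Eventually.of_forall fun t => ?_)
    · simp only [Function.uncurry_def]; fun_prop
    · exact ((measurePreserving_add_right volume (t • e)).prod (MeasurePreserving.id μ)).map_eq
  have hR : MeasurePreserving (fun q : V × (ℝ × Y) => ((q.2.1, (q.1, q.2.2)) : ℝ × (V × Y)))
      ((volume : Measure V).prod (τ.prod μ)) (τ.prod ((volume : Measure V).prod μ)) := by
    have a1 := (measurePreserving_prodAssoc (volume : Measure V) τ μ).symm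
    have a2 := (Measure.measurePreserving_swap (μ := (volume : Measure V)) (ν := τ)).prod
      (MeasurePreserving.id μ)
    have a3 := measurePreserving_prodAssoc τ (volume : Measure V) μ
    exact a3.comp (a2.comp a1)
  have h2 := (hR.integrable_comp ((hM.integrable_comp h1.aestronglyMeasurable).2
    h1).aestronglyMeasurable).2 ((hM.integrable_comp h1.aestronglyMeasurable).2 h1)
  exact h2.prod_right_ae

/-- An almost everywhere property holds at almost every point of almost every line. -/
lemma ae_line {P : V → Prop} (h : ∀ᵐ x, P x) (e : V) :
    ∀ᵐ x : V, ∀ᵐ t : ℝ, P (x + t • e) := by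
  obtain ⟨s, hs, hms, hs0⟩ := exists_measurable_superset_of_null (ae_iff.1 h)
  have h1 : ∀ᵐ x : V, x ∈ sᶜ := by
    rw [ae_iff]; simpa using hs0
  have := (ae_ae_add_linearMap_mem_iff (LinearMap.toSpanSingleton ℝ V e) (volume : Measure ℝ)
    (volume : Measure V) hms.compl).2 h1
  filter_upwards [this] with x hx
  filter_upwards [hx] with t ht
  by_contra hn
  exact ht (hs (by simpa using hn))

/-- The classical derivative `D i k`, which is `0` by convention where `k` is not differentiable,
is almost everywhere either `0` or the integral of the derivatives. The sets where `k` vanishes or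
agrees with the integral need not be regular in any way, so that this statement can be iterated
beyond the classical differentiability of the parameter integral. -/
lemma step {Y : Type*} [MeasurableSpace Y] {μ : Measure Y} [SFinite μ] {U : Set V}
    (hU : IsOpen U) (hc : Convex ℝ U) (i : Fin 3) {ψ : Y → V → ℝ} (hs : ∀ y, Sm (ψ y))
    (h0 : Integrable (fun p : V × Y => ψ p.2 p.1) ((volume.restrict U).prod μ))
    (h1 : Integrable (fun p : V × Y => D i (ψ p.2) p.1) ((volume.restrict U).prod μ))
    {k : V → ℝ} (hk : ∀ᵐ x ∂volume.restrict U, k x = 0 ∨ k x = ∫ y, ψ y x ∂μ) :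
    ∀ᵐ x ∂volume.restrict U, D i k x = 0 ∨ D i k x = ∫ y, D i (ψ y) x ∂μ := by
  set H : V → ℝ := fun x => ∫ y, D i (ψ y) x ∂μ with hH
  have hHm : AEStronglyMeasurable H (volume.restrict U) :=
    h1.integral_prod_left.aestronglyMeasurable
  set H' := hHm.mk H
  have hHH' : ∀ᵐ x : V, x ∈ U → H x = H' x :=
    (ae_restrict_iff' hU.measurableSet).1 hHm.ae_eq_mk
  have hDk : Measurable (D i k) := measurable_fderiv_apply_const ℝ k (eV i)
  have hG : MeasurableSet {x : V | x ∈ U → (D i k x = 0 ∨ D i k x = H' x)} := by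
    have a1 : MeasurableSet {x : V | D i k x = 0} := hDk (measurableSet_singleton 0)
    have a2 : MeasurableSet {x : V | D i k x = H' x} :=
      measurableSet_eq_fun hDk hHm.stronglyMeasurable_mk.measurable
    have : {x : V | x ∈ U → (D i k x = 0 ∨ D i k x = H' x)} =
        Uᶜ ∪ ({x : V | D i k x = 0} ∪ {x : V | D i k x = H' x}) := by
      ext x; simp [imp_iff_not_or]
    rw [this]
    exact hU.measurableSet.compl.union (a1.union a2)
  have main : ∀ᵐ x : V, x ∈ U → (D i k x = 0 ∨ D i k x = H' x) := by
    refine (ae_ae_add_linearMap_mem_iff (LinearMap.toSpanSingleton ℝ V (eV i))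
      (volume : Measure ℝ) (volume : Measure V) hG).1 ?_
    have hΨ : Integrable (fun p : V × Y => U.indicator (D i (ψ p.2)) p.1)
        ((volume : Measure V).prod μ) := by
      have e : (fun p : V × Y => U.indicator (D i (ψ p.2)) p.1) =
          (U ×ˢ (Set.univ : Set Y)).indicator (fun p : V × Y => D i (ψ p.2) p.1) := by
        funext p
        by_cases hp : p.1 ∈ U <;> simp [hp]
      rw [e, integrable_indicator_iff (hU.measurableSet.prod MeasurableSet.univ), IntegrableOn,
        ← Measure.prod_restrict, Measure.restrict_univ]
      exact h1
    have b1 := line_integrable hΨ (eV i)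
    have b2 := ae_line ((ae_restrict_iff' hU.measurableSet).1 h0.prod_right_ae) (eV i)
    have b3 := ae_line ((ae_restrict_iff' hU.measurableSet).1 hk) (eV i)
    have b4 := ae_line hHH' (eV i)
    filter_upwards [b1, b2, b3, b4] with x c1 c2 c3 c4
    have hlineD : ∀ t : ℝ, HasDerivAt (fun t : ℝ => x + t • eV i) (eV i) t := fun t => by
      simpa using ((hasDerivAt_id t).smul_const (eV i)).const_add x
    have hline : Continuous (fun t : ℝ => x + t • eV i) := by fun_prop
    have hconv : Convex ℝ ((fun t : ℝ => x + t • eV i) ⁻¹' U) := by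
      intro s hs t ht a b ha hb hab
      have h := hc hs ht ha hb hab
      have e : x + (a • s + b • t) • eV i = a • (x + s • eV i) + b • (x + t • eV i) := by
        nth_rewrite 1 [show x = (a + b) • x by rw [hab, one_smul]]
        simp only [smul_add, add_smul, smul_smul, smul_eq_mul]
        abel
      rw [Set.mem_preimage, e]
      exact h
    have key := line_step (μ := μ) (I := (fun t : ℝ => x + t • eV i) ⁻¹' U)
      (θ := fun y t => ψ y (x + t • eV i)) (θ' := fun y t => D i (ψ y) (x + t • eV i))
      (a := fun t => k (x + t • eV i)) (hU.preimage hline) hconv.ordConnected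
      (fun y s => ((hs y).diff _).hasFDerivAt.comp_hasDerivAt s (hlineD s))
      (fun y => ((hs y).D i).cont.comp hline) c1 c2 c3
    filter_upwards [key, c4] with t k1 k2
    simp only [LinearMap.toSpanSingleton_apply]
    intro htU
    by_cases hdiff : DifferentiableAt ℝ k (x + t • eV i)
    · rcases k1 htU (D i k (x + t • eV i))
        (hdiff.hasFDerivAt.comp_hasDerivAt t (hlineD t)) with h | h
      · exact Or.inl h
      · exact Or.inr (h.trans (k2 htU))
    · exact Or.inl (by simp [D, fderiv_zero_of_not_differentiableAt hdiff])
  rw [ae_restrict_iff' hU.measurableSet]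
  filter_upwards [main, hHH'] with x m1 m2 hx
  have h2 := m2 hx
  change D i k x = 0 ∨ D i k x = H x
  rw [h2]
  exact m1 hx

/-- Iteration of `step` in one direction. -/
lemma step_iter {Y : Type*} [MeasurableSpace Y] {μ : Measure Y} [SFinite μ] {U : Set V}
    (hU : IsOpen U) (hc : Convex ℝ U) (i : Fin 3) {ψ : Y → V → ℝ} (hs : ∀ y, Sm (ψ y)) (n : ℕ)
    (h0 : ∀ j ≤ n, Integrable (fun p : V × Y => (D i)^[j] (ψ p.2) p.1)
      ((volume.restrict U).prod μ))
    {k : V → ℝ} (hk : ∀ᵐ x ∂volume.restrict U, k x = 0 ∨ k x = ∫ y, ψ y x ∂μ) :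
    ∀ᵐ x ∂volume.restrict U, (D i)^[n] k x = 0 ∨ (D i)^[n] k x = ∫ y, (D i)^[n] (ψ y) x ∂μ := by
  induction n with
  | zero => exact hk
  | succ n ih =>
    have h1 := h0 (n + 1) le_rfl
    simp only [Function.iterate_succ_apply'] at h1 ⊢
    exact step hU hc i (fun y => (hs y).iter i n) (h0 n (by omega)) h1
      (ih fun j hj => h0 j (by omega))

/-- Iteration of `step` over the three directions, in the order used in the definition of
`DA`. -/
lemma step_DA {Y : Type*} [MeasurableSpace Y] {μ : Measure Y} [SFinite μ] {U : Set V}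
    (hU : IsOpen U) (hc : Convex ℝ U) {ψ : Y → V → ℝ} (hs : ∀ y, Sm (ψ y)) {α : Fin 3 → ℕ}
    (h0 : ∀ β : Fin 3 → ℕ, β 0 + β 1 + β 2 ≤ α 0 + α 1 + α 2 →
      Integrable (fun p : V × Y => DA β (ψ p.2) p.1) ((volume.restrict U).prod μ))
    {k : V → ℝ} (hk : ∀ᵐ x ∂volume.restrict U, k x = 0 ∨ k x = ∫ y, ψ y x ∂μ) :
    ∀ᵐ x ∂volume.restrict U, DA α k x = 0 ∨ DA α k x = ∫ y, DA α (ψ y) x ∂μ := by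
  have e2 := step_iter hU hc 2 hs (α 2) (fun j hj => h0 ![0, 0, j] (by simp; omega)) hk
  have e1 := step_iter hU hc 1 (fun y => (hs y).iter 2 (α 2)) (α 1)
    (fun j hj => h0 ![0, j, α 2] (by simp; omega)) e2
  exact step_iter hU hc 0 (fun y => ((hs y).iter 2 (α 2)).iter 1 (α 1)) (α 0)
    (fun j hj => h0 ![j, α 1, α 2] (by simp; omega)) e1

lemma box_convex : Convex ℝ box := by
  rw [box_eq]
  have : Convex ℝ (Set.univ.pi fun _ : Fin 3 => I0) :=
    convex_pi fun _ _ => convex_Ico _ _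
  exact this.linear_preimage (EuclideanSpace.equiv (Fin 3) ℝ).toLinearMap

/-- The statement of `step` for `∂^α` on the fundamental domain `box`. Only the interior of `box`,
which is open and convex, matters, since its frontier is a null set; periodicity plays no role. -/
lemma step_box {Y : Type*} [MeasurableSpace Y] {μ : Measure Y} [SFinite μ]
    {ψ : Y → V → ℝ} (hs : ∀ y, Sm (ψ y)) {α : Fin 3 → ℕ}
    (h0 : ∀ β : Fin 3 → ℕ, β 0 + β 1 + β 2 ≤ α 0 + α 1 + α 2 →
      Integrable (fun p : V × Y => DA β (ψ p.2) p.1) ((volume.restrict box).prod μ))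
    {k : V → ℝ} (hk : ∀ᵐ x ∂volume.restrict box, k x = 0 ∨ k x = ∫ y, ψ y x ∂μ) :
    ∀ᵐ x ∂volume.restrict box, DA α k x = 0 ∨ DA α k x = ∫ y, DA α (ψ y) x ∂μ := by
  have e : (volume : Measure V).restrict box = volume.restrict (interior box) :=
    (Measure.restrict_congr_set
      (interior_ae_eq_of_null_frontier (box_convex.addHaar_frontier volume))).symm
  rw [e] at h0 hk ⊢
  exact step_DA isOpen_interior box_convex.interior hs h0 hk

/-! ### The collision map -/

instance : IsFiniteMeasure σS := by unfold σS; infer_instance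

/-- The collision kernel `|(u - v) · ω|` at `(v, (u, ω))`. -/
def Kc (q : V × (V × S2)) : ℝ := |⟪q.2.1 - q.1, (q.2.2 : V)⟫_ℝ|

/-- The collision map `(v, (u, ω)) ↦ (v', (u', ω))`. -/
def T (q : V × (V × S2)) : V × (V × S2) :=
  (q.1 + ⟪q.2.1 - q.1, (q.2.2 : V)⟫_ℝ • (q.2.2 : V),
    (q.2.1 - ⟪q.2.1 - q.1, (q.2.2 : V)⟫_ℝ • (q.2.2 : V), q.2.2))

lemma norm_S2 (ω : S2) : ‖(ω : V)‖ = 1 := by simp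

lemma inner_S2 (ω : S2) : ⟪(ω : V), (ω : V)⟫_ℝ = 1 := by
  rw [real_inner_self_eq_norm_sq, norm_S2]; norm_num

/-- For fixed `ω` the collision map is a linear involution of `ℝ³ × ℝ³`. -/
def Lc (ω : S2) : (V × V) →ₗ[ℝ] (V × V) where
  toFun p := (p.1 + ⟪p.2 - p.1, (ω : V)⟫_ℝ • (ω : V), p.2 - ⟪p.2 - p.1, (ω : V)⟫_ℝ • (ω : V))
  map_add' p q := by
    ext1
    · simp only [Prod.fst_add, Prod.snd_add, inner_sub_left, inner_add_left, sub_smul, add_smul]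
      abel
    · simp only [Prod.fst_add, Prod.snd_add, inner_sub_left, inner_add_left, sub_smul, add_smul]
      abel
  map_smul' c p := by
    ext1
    · simp only [Prod.smul_fst, Prod.smul_snd, ← smul_sub, inner_smul_left, RCLike.conj_to_real,
        RingHom.id_apply, smul_add, mul_smul]
    · simp only [Prod.smul_fst, Prod.smul_snd, inner_sub_left, inner_smul_left,
        RCLike.conj_to_real, RingHom.id_apply, smul_sub, sub_smul, mul_smul]

lemma Lc_invol (ω : S2) (p : V × V) : Lc ω (Lc ω p) = p := by
  have h : ⟪(Lc ω p).2 - (Lc ω p).1, (ω : V)⟫_ℝ = -⟪p.2 - p.1, (ω : V)⟫_ℝ := by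
    simp only [Lc, LinearMap.coe_mk, AddHom.coe_mk, inner_sub_left, inner_add_left,
      inner_smul_left, inner_S2, RCLike.conj_to_real]
    ring
  have e : Lc ω (Lc ω p) = ((Lc ω p).1 + ⟪(Lc ω p).2 - (Lc ω p).1, (ω : V)⟫_ℝ • (ω : V),
    (Lc ω p).2 - ⟪(Lc ω p).2 - (Lc ω p).1, (ω : V)⟫_ℝ • (ω : V)) := rfl
  rw [e, h]
  simp [Lc]

lemma Lc_map (ω : S2) : 
    Measure.map (Lc ω) ((volume : Measure V).prod volume) = (volume : Measure V).prod volume := by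
  have h1 : LinearMap.det (Lc ω) * LinearMap.det (Lc ω) = 1 := by
    rw [← LinearMap.det_comp]
    rw [show (Lc ω).comp (Lc ω) = LinearMap.id from LinearMap.ext (Lc_invol ω)]
    exact LinearMap.det_id
  have h0 : LinearMap.det (Lc ω) ≠ 0 := fun h => by simp [h] at h1
  rw [Measure.map_linearMap_addHaar_eq_smul_addHaar _ h0]
  rcases mul_self_eq_one_iff.1 h1 with h | h <;> simp [h]

/-- The collision map preserves the measure `dv du dω`. -/
lemma T_mp : MeasurePreserving T ((volume : Measure V).prod ((volume : Measure V).prod σS))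
    ((volume : Measure V).prod ((volume : Measure V).prod σS)) := by
  have hS : MeasurePreserving (fun r : S2 × (V × V) => (id r.1, Lc r.1 r.2))
      (σS.prod ((volume : Measure V).prod volume)) (σS.prod ((volume : Measure V).prod volume)) := by
    refine MeasurePreserving.skew_product (g := fun (ω : S2) (p : V × V) => Lc ω p)
      (MeasurePreserving.id σS) ?_ (Eventually.of_forall fun ω => Lc_map ω)
    simp only [Function.uncurry_def, Lc, LinearMap.coe_mk, AddHom.coe_mk]
    fun_prop
  have a1 := (measurePreserving_prodAssoc (volume : Measure V) (volume : Measure V) σS).symm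
  have a2 := Measure.measurePreserving_swap (μ := (volume : Measure V).prod (volume : Measure V))
    (ν := σS)
  have a3 := Measure.measurePreserving_swap (ν := (volume : Measure V).prod (volume : Measure V))
    (μ := σS)
  have a4 := measurePreserving_prodAssoc (volume : Measure V) (volume : Measure V) σS
  exact a4.comp (a3.comp (hS.comp (a2.comp a1)))

lemma Kc_T (q : V × (V × S2)) : Kc (T q) = Kc q := by
  simp only [Kc, T, inner_sub_left, inner_add_left, inner_smul_left, inner_S2,
    RCLike.conj_to_real]
  rw [← abs_neg]; congr 1; ring

lemma T_energy (q : V × (V × S2)) :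
    ‖(T q).1‖ ^ 2 + ‖(T q).2.1‖ ^ 2 = ‖q.1‖ ^ 2 + ‖q.2.1‖ ^ 2 := by
  simp only [T, norm_add_sq_real, norm_sub_sq_real, norm_smul, norm_S2, inner_smul_right,
    inner_sub_left, Real.norm_eq_abs, mul_one, sq_abs]
  ring

/-! ### Weights -/

lemma one_le_jap (v : V) : 1 ≤ jap v := by
  unfold jap; rw [Real.one_le_sqrt]; nlinarith [sq_nonneg ‖v‖]

lemma jap_sq (v : V) : jap v ^ 2 = 1 + ‖v‖ ^ 2 := by
  unfold jap; rw [Real.sq_sqrt (by positivity)]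

lemma norm_le_jap (v : V) : ‖v‖ ≤ jap v := by
  have := jap_sq v; have := one_le_jap v
  exact abs_le_of_sq_le_sq' (by linarith) (by linarith) |>.2

lemma jap_cont : Continuous jap := by unfold jap; fun_prop

/-- The weight `⟨v⟩^m`. -/
def W (m : ℝ) (v : V) : ENNReal := ENNReal.ofReal (jap v ^ m)

lemma W_meas (m : ℝ) : Measurable (W m) := by
  unfold W
  exact (jap_cont.measurable.pow_const m).ennreal_ofReal

lemma one_le_W {m : ℝ} (hm : 0 ≤ m) (v : V) : 1 ≤ W m v := by
  unfold W
  rw [← ENNReal.ofReal_one]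
  exact ENNReal.ofReal_le_ofReal (Real.one_le_rpow (one_le_jap v) hm)

lemma jap_le_add {v a b : V} (h : ‖v‖ ^ 2 ≤ ‖a‖ ^ 2 + ‖b‖ ^ 2) : jap v ≤ jap a + jap b := by
  have := jap_sq v; have := jap_sq a; have := jap_sq b
  have h1 := one_le_jap a; have h2 := one_le_jap b
  refine (abs_le_of_sq_le_sq' ?_ (by linarith)).2
  nlinarith

lemma weight_real {m j k a b : ℝ} (hm : 0 ≤ m) (hj : 0 ≤ j) (hk : 0 ≤ k) (ha : 0 < a) (hb : 0 < b)
    (h1 : j ≤ a + b) (h2 : k ≤ a + b) :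
    j ^ m * k ≤ 2 ^ (m + 1) * (b ^ (m + 1) + a ^ (m + 1)) := by
  have hmax : a + b ≤ 2 * max a b := by
    linarith [le_max_left a b, le_max_right a b]
  calc j ^ m * k ≤ (a + b) ^ m * (a + b) :=
        mul_le_mul (Real.rpow_le_rpow hj h1 hm) h2 hk (by positivity)
    _ = (a + b) ^ (m + 1) := by rw [Real.rpow_add_one (by positivity)]
    _ ≤ (2 * max a b) ^ (m + 1) := Real.rpow_le_rpow (by positivity) hmax (by positivity)
    _ = 2 ^ (m + 1) * (max a b) ^ (m + 1) :=
        Real.mul_rpow (by norm_num) (le_max_of_le_left ha.le)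
    _ ≤ 2 ^ (m + 1) * (b ^ (m + 1) + a ^ (m + 1)) := by
        gcongr
        have := Real.rpow_nonneg ha.le (m + 1)
        have := Real.rpow_nonneg hb.le (m + 1)
        rcases max_choice a b with h | h <;> rw [h] <;> linarith

lemma Kc_le (q : V × (V × S2)) : Kc q ≤ jap q.1 + jap q.2.1 := by
  have h1 : Kc q ≤ ‖q.2.1 - q.1‖ * ‖(q.2.2 : V)‖ := abs_real_inner_le_norm _ _
  rw [norm_S2, mul_one] at h1
  linarith [norm_sub_le q.2.1 q.1, norm_le_jap q.1, norm_le_jap q.2.1]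

/-- The weight estimate `⟨v⟩^m |(u - v) · ω| ≤ 2^(m+1) (⟨u⟩^(m+1) + ⟨v⟩^(m+1))`, valid with any
`w` controlled by the energy `|u|² + |v|²` in place of the first `v`. -/
lemma weight_le {m : ℝ} (hm : 0 ≤ m) (q : V × (V × S2)) {w : V}
    (hw : ‖w‖ ^ 2 ≤ ‖q.1‖ ^ 2 + ‖q.2.1‖ ^ 2) :
    W m w * ENNReal.ofReal (Kc q) ≤
      ENNReal.ofReal (2 ^ (m + 1)) * (W (m + 1) q.2.1 + W (m + 1) q.1) := by
  have p1 := one_le_jap q.1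
  have p2 := one_le_jap q.2.1
  have p3 := one_le_jap w
  unfold W
  rw [← ENNReal.ofReal_mul (by positivity), ← ENNReal.ofReal_add (by positivity) (by positivity),
    ← ENNReal.ofReal_mul (by positivity)]
  exact ENNReal.ofReal_le_ofReal (weight_real hm (by linarith) (abs_nonneg _) (by linarith)
    (by linarith) (jap_le_add hw) (Kc_le q))

/-! ### Measurability -/

/-- The measure `dv ⊗ dx` on `ℝ³ × 𝕋³`. -/
abbrev μVX : Measure (V × V) := (volume : Measure V).prod ((volume : Measure V).restrict box)

/-- The measure `du ⊗ dω`. -/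
abbrev μY : Measure (V × S2) := (volume : Measure V).prod σS

instance : SFinite σS := inferInstance

/-- Joint measurability of all derivatives of order at most eight of a family `a` of functions. -/
def JM {Z : Type*} [MeasurableSpace Z] (ρ : Measure Z) (a : Z → V → ℝ) : Prop :=
  ∀ β : Fin 3 → ℕ, β 0 + β 1 + β 2 ≤ 8 →
    AEStronglyMeasurable (fun q : Z × V => DA β (a q.1) q.2) (ρ.prod (volume.restrict box))

lemma JM.comp {Z Z' : Type*} [MeasurableSpace Z] [MeasurableSpace Z'] {ρ : Measure Z}
    {ρ' : Measure Z'} [SFinite ρ] [SFinite ρ'] {a : Z → V → ℝ} (ha : JM ρ a) {p : Z' → Z}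
    (hp : Measure.QuasiMeasurePreserving p ρ' ρ) : JM ρ' (fun z => a (p z)) := fun β hβ =>
  (ha β hβ).comp_quasiMeasurePreserving
    (QuasiMeasurePreserving.prodMap hp
      (Measure.QuasiMeasurePreserving.id ((volume : Measure V).restrict box)))

lemma JM.mul {Z : Type*} [MeasurableSpace Z] {ρ : Measure Z} {a b : Z → V → ℝ}
    (ha : JM ρ a) (hb : JM ρ b) (sa : ∀ z, Sm (a z)) (sb : ∀ z, Sm (b z)) :
    JM ρ (fun z x => a z x * b z x) := by
  intro β hβ
  obtain ⟨L, -, h2, h3⟩ := leib_DA β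
  have key : ∀ L : List ((Fin 3 → ℕ) × (Fin 3 → ℕ)),
      (∀ p ∈ L, p.1 0 + p.1 1 + p.1 2 + (p.2 0 + p.2 1 + p.2 2) ≤ 8) →
      AEStronglyMeasurable (fun q : Z × V =>
        (L.map (fun p => DA p.1 (a q.1) q.2 * DA p.2 (b q.1) q.2)).sum)
        (ρ.prod (volume.restrict box)) := by
    intro L
    induction L with
    | nil => intro _; simpa using aestronglyMeasurable_const
    | cons p L ih =>
      intro h
      simp only [List.map_cons, List.sum_cons]
      have hp := h p (by simp)
      exact ((ha _ (by omega)).mul (hb _ (by omega))).add (ih fun q hq => h q (by simp [hq]))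
  have e : (fun q : Z × V => DA β (fun x => a q.1 x * b q.1 x) q.2) = fun q : Z × V =>
      (L.map (fun p => DA p.1 (a q.1) q.2 * DA p.2 (b q.1) q.2)).sum := by
    funext q
    rw [h3 _ _ (sa q.1) (sb q.1)]
  rw [e]
  exact key L fun p hp => (h2 p hp).trans_le hβ

lemma JM.nf {a : V → V → ℝ} (ha : JM volume a) : AEMeasurable (fun v => NF (a v)) volume := by
  unfold NF
  refine Finset.aemeasurable_fun_sum _ fun β _ => ?_
  split_ifs with h
  · exact (ha (fun i => (β i : ℕ)) h).enorm.lintegral_prod_right'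
  · exact aemeasurable_const

/-! ### The collision integrand -/

/-- The integrand of `Q(f, g)(v, x)` at `y = (u, ω)`. -/
def ψ (f g : V → V → ℝ) (v : V) (y : V × S2) : V → ℝ := fun x =>
  Kc (v, y) * (f (T (v, y)).2.1 x * g (T (v, y)).1 x - f y.1 x * g v x)

lemma ψ_sm {f g : V → V → ℝ} (sf : ∀ v, Sm (f v)) (sg : ∀ v, Sm (g v))
    (v : V) (y : V × S2) : Sm (ψ f g v y) :=
  contDiff_const.mul (((sf _).mul (sg _)).sub ((sf _).mul (sg _)))

lemma DA_ψ {f g : V → V → ℝ} (sf : ∀ v, Sm (f v)) (sg : ∀ v, Sm (g v))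
    (v : V) (y : V × S2) (β : Fin 3 → ℕ) : DA β (ψ f g v y) = fun x =>
    Kc (v, y) * (DA β (fun x => f (T (v, y)).2.1 x * g (T (v, y)).1 x) x -
      DA β (fun x => f y.1 x * g v x) x) := by
  unfold ψ
  rw [DA_cmul (ContDiff.sub ((sf _).mul (sg _)) ((sf _).mul (sg _))),
    DA_sub ((sf _).mul (sg _)) ((sf _).mul (sg _))]

lemma ψ_JM {f g : V → V → ℝ} (sf : ∀ v, Sm (f v)) (sg : ∀ v, Sm (g v))
    (hf : JM volume f) (hg : JM volume g) :
    JM ((volume : Measure V).prod μY) (fun q => ψ f g q.1 q.2) := by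
  intro β hβ
  have q1 : Measure.QuasiMeasurePreserving (fun q : V × (V × S2) => q.1)
      ((volume : Measure V).prod μY) volume := Measure.quasiMeasurePreserving_fst
  have q2 : Measure.QuasiMeasurePreserving (fun q : V × (V × S2) => q.2.1)
      ((volume : Measure V).prod μY) volume :=
    Measure.quasiMeasurePreserving_fst.comp Measure.quasiMeasurePreserving_snd
  have q3 : Measure.QuasiMeasurePreserving (fun q : V × (V × S2) => (T q).1)
      ((volume : Measure V).prod μY) volume := q1.comp T_mp.quasiMeasurePreserving
  have q4 : Measure.QuasiMeasurePreserving (fun q : V × (V × S2) => (T q).2.1)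
      ((volume : Measure V).prod μY) volume := q2.comp T_mp.quasiMeasurePreserving
  have m1 := (hf.comp q4).mul (hg.comp q3) (fun _ => sf _) (fun _ => sg _) β hβ
  have m2 := (hf.comp q2).mul (hg.comp q1) (fun _ => sf _) (fun _ => sg _) β hβ
  have mK : Measurable (fun q : (V × (V × S2)) × V => Kc q.1) := by
    unfold Kc; fun_prop
  simp only [DA_ψ sf sg]
  exact mK.aestronglyMeasurable.mul (m1.sub m2)

/-- The bound for fixed velocities: the algebra property of the `x`-norm `NF`, applied to the gain
and the loss term. -/
lemma ψ_bound {f g : V → V → ℝ} (sf : ∀ v, Sm (f v)) (sg : ∀ v, Sm (g v))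
    (q : V × (V × S2)) {β : Fin 3 → ℕ} (hβ : β 0 + β 1 + β 2 ≤ 8) :
    ∫⁻ x in box, ‖DA β (ψ f g q.1 q.2) x‖ₑ ≤ ENNReal.ofReal (Kc q) *
      (702464 * (NF (f (T q).2.1) * NF (g (T q).1)) + 702464 * (NF (f q.2.1) * NF (g q.1))) := by
  rw [DA_ψ sf sg]
  have e : ‖Kc q‖ₑ = ENNReal.ofReal (Kc q) := Real.enorm_of_nonneg (abs_nonneg _)
  simp only [enorm_mul, Prod.mk.eta, e]
  rw [lintegral_const_mul' _ _ ENNReal.ofReal_ne_top]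
  gcongr
  calc _ ≤ ∫⁻ x in box, (‖DA β (fun x => f (T q).2.1 x * g (T q).1 x) x‖ₑ +
        ‖DA β (fun x => f q.2.1 x * g q.1 x) x‖ₑ) := lintegral_mono fun x => enorm_sub_le
    _ = (∫⁻ x in box, ‖DA β (fun x => f (T q).2.1 x * g (T q).1 x) x‖ₑ) +
        ∫⁻ x in box, ‖DA β (fun x => f q.2.1 x * g q.1 x) x‖ₑ :=
      lintegral_add_left ((((sf _).mul (sg _)).DA β).cont.measurable.enorm) _
    _ ≤ _ := by
      gcongr
      · exact DA_mul_le (sf _) (sg _) hβ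
      · exact DA_mul_le (sf _) (sg _) hβ

/-- Weighted estimate of the collision integrand. The gain term is the loss term composed with the
measure-preserving map `T`, and both are dominated by
`2^(m+1) (⟨u⟩^(m+1) + ⟨v⟩^(m+1)) ‖f(u)‖ ‖g(v)‖`, whose integral factorizes. -/
lemma gain_loss {f g : V → V → ℝ} (sf : ∀ v, Sm (f v)) (sg : ∀ v, Sm (g v))
    {m : ℝ} (hm : 0 ≤ m) (hf : JM volume f) (hg : JM volume g)
    {β : Fin 3 → ℕ} (hβ : β 0 + β 1 + β 2 ≤ 8) :
    ∫⁻ q, W m q.1 * (∫⁻ x in box, ‖DA β (ψ f g q.1 q.2) x‖ₑ) ∂((volume : Measure V).prod μY) ≤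
      (702464 * 2 * ENNReal.ofReal (2 ^ (m + 1)) * σS Set.univ) *
        ((∫⁻ v, W (m + 1) v * NF (f v)) * (∫⁻ v, NF (g v)) +
          (∫⁻ v, W (m + 1) v * NF (g v)) * ∫⁻ v, NF (f v)) := by
  set c : ENNReal := ENNReal.ofReal (2 ^ (m + 1)) with hc
  set G : V × (V × S2) → ENNReal := fun q =>
    c * (W (m + 1) q.2.1 + W (m + 1) q.1) * (NF (f q.2.1) * NF (g q.1)) with hG
  have q1 : Measure.QuasiMeasurePreserving (fun q : V × (V × S2) => q.1)
      ((volume : Measure V).prod μY) volume := Measure.quasiMeasurePreserving_fst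
  have q2 : Measure.QuasiMeasurePreserving (fun q : V × (V × S2) => q.2.1)
      ((volume : Measure V).prod μY) volume :=
    Measure.quasiMeasurePreserving_fst.comp Measure.quasiMeasurePreserving_snd
  have nf := hf.nf
  have ng := hg.nf
  have wm := W_meas (m + 1)
  have hGm : AEMeasurable G ((volume : Measure V).prod μY) := by
    have n2 : AEMeasurable (fun q : V × (V × S2) => NF (f q.2.1))
      ((volume : Measure V).prod μY) := nf.comp_quasiMeasurePreserving q2
    have n1 : AEMeasurable (fun q : V × (V × S2) => NF (g q.1))
      ((volume : Measure V).prod μY) := ng.comp_quasiMeasurePreserving q1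
    have w2 : Measurable (fun q : V × (V × S2) => W (m + 1) q.2.1) := by fun_prop
    have w1 : Measurable (fun q : V × (V × S2) => W (m + 1) q.1) := by fun_prop
    exact ((w2.add w1).aemeasurable.const_mul c).mul (n2.mul n1)
  have hGT : ∫⁻ q, G (T q) ∂((volume : Measure V).prod μY) =
      ∫⁻ q, G q ∂((volume : Measure V).prod μY) := by
    have := lintegral_map' (f := G) (g := T) (μ := (volume : Measure V).prod μY)
      (by rw [T_mp.map_eq]; exact hGm) T_mp.measurable.aemeasurable
    rw [← this, T_mp.map_eq]
  have hGi : ∫⁻ q, G q ∂((volume : Measure V).prod μY) = c * σS Set.univ *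
      ((∫⁻ v, W (m + 1) v * NF (f v)) * (∫⁻ v, NF (g v)) +
          (∫⁻ v, W (m + 1) v * NF (g v)) * ∫⁻ v, NF (f v)) := by
    have hwf : AEMeasurable (fun v => W (m + 1) v * NF (f v)) volume := wm.aemeasurable.mul nf
    have hwg : AEMeasurable (fun v => W (m + 1) v * NF (g v)) volume := wm.aemeasurable.mul ng
    have hin : ∀ h : V → ENNReal, AEMeasurable h volume →
        ∫⁻ y : V × S2, h y.1 ∂μY = (∫⁻ u, h u) * σS Set.univ := by
      intro h hh
      have := lintegral_prod_mul (μ := (volume : Measure V)) (ν := σS) (f := h)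
        (g := fun _ => 1) hh aemeasurable_const
      simpa using this
    have s2 : ∀ h k : V → ENNReal, AEMeasurable h volume → AEMeasurable k volume →
        ∫⁻ q, k q.1 * h q.2.1 ∂((volume : Measure V).prod μY) =
          (∫⁻ v, k v) * ((∫⁻ u, h u) * σS Set.univ) := by
      intro h k hh hk
      rw [← hin h hh]
      exact lintegral_prod_mul hk
        (hh.comp_quasiMeasurePreserving Measure.quasiMeasurePreserving_fst)
    have e : ∀ q, G q = c * (NF (g q.1) * (W (m + 1) q.2.1 * NF (f q.2.1)) +
        (W (m + 1) q.1 * NF (g q.1)) * NF (f q.2.1)) := by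
      intro q; simp only [hG]; ring
    have hA : AEMeasurable (fun q : V × (V × S2) =>
        NF (g q.1) * (W (m + 1) q.2.1 * NF (f q.2.1))) ((volume : Measure V).prod μY) :=
      (ng.comp_quasiMeasurePreserving q1).mul (hwf.comp_quasiMeasurePreserving q2)
    simp only [e]
    rw [lintegral_const_mul' _ _ ENNReal.ofReal_ne_top, lintegral_add_left' hA,
      s2 (fun v => W (m + 1) v * NF (f v)) (fun v => NF (g v)) hwf ng,
      s2 (fun v => NF (f v)) (fun v => W (m + 1) v * NF (g v)) nf hwg]
    ring
  calc _ ≤ ∫⁻ q, 702464 * (G (T q) + G q) ∂((volume : Measure V).prod μY) := by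
        refine lintegral_mono fun q => ?_
        have b1 := weight_le hm q (w := q.1) (by nlinarith [sq_nonneg ‖q.2.1‖])
        have b2 := weight_le hm (T q) (w := q.1)
          (by rw [T_energy]; nlinarith [sq_nonneg ‖q.2.1‖])
        rw [Kc_T] at b2
        calc _ ≤ W m q.1 * (ENNReal.ofReal (Kc q) *
              (702464 * (NF (f (T q).2.1) * NF (g (T q).1)) +
                702464 * (NF (f q.2.1) * NF (g q.1)))) := by
              gcongr; exact ψ_bound sf sg q hβ
          _ = 702464 * ((W m q.1 * ENNReal.ofReal (Kc q)) * (NF (f (T q).2.1) * NF (g (T q).1)) +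
              (W m q.1 * ENNReal.ofReal (Kc q)) * (NF (f q.2.1) * NF (g q.1))) := by ring
          _ ≤ _ := by simp only [hG]; gcongr
    _ = _ := by
        rw [lintegral_const_mul' _ _ (by simp), lintegral_add_right' _ hGm, hGT, hGi]
        ring

/-! ### The estimate in `[0, ∞]` -/

/-- For almost every `v`, every derivative of order at most eight of the collision integrand is
integrable in `(x, u, ω)`. -/
lemma ψ_integrable {f g : V → V → ℝ} (sf : ∀ v, Sm (f v)) (sg : ∀ v, Sm (g v)) {m : ℝ}
    (hm : 0 ≤ m) (hf : JM volume f) (hg : JM volume g)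
    (ff : ∫⁻ v, W (m + 1) v * NF (f v) ≠ ⊤) (fg : ∫⁻ v, W (m + 1) v * NF (g v) ≠ ⊤) :
    ∀ᵐ v : V, ∀ β : Fin 3 → ℕ, β 0 + β 1 + β 2 ≤ 8 →
      Integrable (fun p : V × (V × S2) => DA β (ψ f g v p.2) p.1)
        ((volume.restrict box).prod μY) := by
  have drop : ∀ h : V → V → ℝ, ∫⁻ v, W (m + 1) v * NF (h v) ≠ ⊤ → ∫⁻ v, NF (h v) ≠ ⊤ := by
    intro h hh
    refine ne_top_of_le_ne_top hh (lintegral_mono fun v => ?_)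
    exact le_mul_of_one_le_left zero_le (one_le_W (by linarith) v)
  rw [ae_all_iff]
  intro β
  by_cases hβ : β 0 + β 1 + β 2 ≤ 8
  swap
  · exact Eventually.of_forall fun v h => absurd h hβ
  have hm1 := ψ_JM sf sg hf hg β hβ
  have hintg : Integrable (fun q : (V × (V × S2)) × V => DA β (ψ f g q.1.1 q.1.2) q.2)
      (((volume : Measure V).prod μY).prod (volume.restrict box)) := by
    refine ⟨hm1, ?_⟩
    rw [hasFiniteIntegral_iff_enorm, lintegral_prod _ hm1.enorm]
    refine lt_of_le_of_lt (lintegral_mono fun q => ?_)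
      (lt_of_le_of_lt (gain_loss sf sg hm hf hg hβ) ?_)
    · exact le_mul_of_one_le_left zero_le (one_le_W hm q.1)
    · refine ENNReal.mul_lt_top ?_ ?_
      · exact ENNReal.mul_lt_top (ENNReal.mul_lt_top (by norm_num) ENNReal.ofReal_lt_top)
          (measure_lt_top _ _)
      · exact ENNReal.add_lt_top.2 ⟨ENNReal.mul_lt_top ff.lt_top (drop g fg).lt_top,
          ENNReal.mul_lt_top fg.lt_top (drop f ff).lt_top⟩
  have hA := (measurePreserving_prodAssoc (volume : Measure V) μY
    ((volume : Measure V).restrict box)).symm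
  have h2 : Integrable (fun q : V × ((V × S2) × V) => DA β (ψ f g q.1 q.2.1) q.2.2)
      ((volume : Measure V).prod (μY.prod (volume.restrict box))) :=
    (hA.integrable_comp hintg.aestronglyMeasurable).2 hintg
  filter_upwards [h2.prod_right_ae] with v hv _
  exact hv.swap

/-- The estimate in `[0, ∞]`. For almost every `v` the possibly non-classical derivative of
`Q(f, g)` is, at almost every `x`, either `0` or the integral of the derivatives of the integrand,
so that it is dominated by the quantity estimated in `gain_loss`. -/
lemma main_enn {f g : V → V → ℝ} (sf : ∀ v, Sm (f v)) (sg : ∀ v, Sm (g v)) {m : ℝ}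
    (hm : 0 ≤ m) (hf : JM volume f) (hg : JM volume g)
    (ff : ∫⁻ v, W (m + 1) v * NF (f v) ≠ ⊤) (fg : ∫⁻ v, W (m + 1) v * NF (g v) ≠ ⊤)
    {α : Fin 3 → ℕ} (hα : α 0 + α 1 + α 2 ≤ 8) :
    ∫⁻ v, W m v * (∫⁻ x in box, ‖DA α (QopX f g v) x‖ₑ) ≤
      (702464 * 2 * ENNReal.ofReal (2 ^ (m + 1)) * σS Set.univ) *
        ((∫⁻ v, W (m + 1) v * NF (f v)) * (∫⁻ v, NF (g v)) +
          (∫⁻ v, W (m + 1) v * NF (g v)) * ∫⁻ v, NF (f v)) := by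
  refine le_trans ?_ (gain_loss sf sg hm hf hg hα)
  have hmα : AEMeasurable (fun q : V × (V × S2) =>
      W m q.1 * ∫⁻ x in box, ‖DA α (ψ f g q.1 q.2) x‖ₑ) ((volume : Measure V).prod μY) :=
    ((W_meas m).comp measurable_fst).aemeasurable.mul
      (ψ_JM sf sg hf hg α hα).enorm.lintegral_prod_right'
  rw [lintegral_prod _ hmα]
  refine lintegral_mono_ae ?_
  filter_upwards [ψ_integrable sf sg hm hf hg ff fg] with v hv
  have hW : W m v ≠ ⊤ := ENNReal.ofReal_ne_top
  rw [lintegral_const_mul' _ _ hW]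
  gcongr
  have hk : ∀ᵐ x ∂volume.restrict box, QopX f g v x = 0 ∨ QopX f g v x = ∫ y, ψ f g v y x ∂μY := by
    have h0 : Integrable (fun p : V × (V × S2) => ψ f g v p.2 p.1)
      ((volume.restrict box).prod μY) := hv (fun _ => 0) (by norm_num)
    filter_upwards [h0.prod_right_ae] with x hx
    -- integrability over `ℝ³ × S²` identifies the iterated integral defining `Q`
    right
    rw [integral_prod _ hx]
    rfl
  have hstep := step_box (μ := μY) (ψ := ψ f g v) (ψ_sm sf sg v) (α := α)
    (fun β hβ => hv β (hβ.trans hα)) hk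
  calc ∫⁻ x in box, ‖DA α (QopX f g v) x‖ₑ
      ≤ ∫⁻ x in box, ∫⁻ y, ‖DA α (ψ f g v y) x‖ₑ ∂μY := by
        refine lintegral_mono_ae ?_
        filter_upwards [hstep] with x hx
        rcases hx with hx | hx
        · rw [hx]; simp
        · rw [hx]; exact enorm_integral_le_lintegral_enorm _
    _ = _ := lintegral_lintegral_swap (hv α hα).aestronglyMeasurable.enorm

/-! ### Passage to real integrals -/

/-- The weighted norm `‖⟨v⟩^k ∂ₓ^β f‖_{L¹(ℝ³ × 𝕋³)}`, in `[0, ∞]`. -/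
def A (k : ℝ) (f : V → V → ℝ) (β : Fin 3 → ℕ) : ENNReal :=
  ∫⁻ v, W k v * ∫⁻ x in box, ‖DA β (f v) x‖ₑ

lemma A_eq {k : ℝ} {f : V → V → ℝ} {β : Fin 3 → ℕ}
    (h : Integrable (fun p : V × V => jap p.1 ^ k * pdA β f p.1 p.2) μVX) :
    A k f β = ∫⁻ p, ‖jap p.1 ^ k * pdA β f p.1 p.2‖ₑ ∂μVX := by
  rw [lintegral_prod _ h.aestronglyMeasurable.enorm]
  refine lintegral_congr fun v => ?_
  have e : ‖jap v ^ k‖ₑ = W k v :=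
    Real.enorm_of_nonneg (Real.rpow_nonneg (by linarith [one_le_jap v]) k)
  simp only [enorm_mul, pdA_eq, e]
  rw [lintegral_const_mul' (W k v) _ ENNReal.ofReal_ne_top]

lemma A_ne_top {k : ℝ} {f : V → V → ℝ} {β : Fin 3 → ℕ}
    (h : Integrable (fun p : V × V => jap p.1 ^ k * pdA β f p.1 p.2) μVX) : A k f β ≠ ⊤ := by
  rw [A_eq h]
  exact (hasFiniteIntegral_iff_enorm.1 h.2).ne

lemma A_toReal {k : ℝ} {f : V → V → ℝ} {β : Fin 3 → ℕ}
    (h : Integrable (fun p : V × V => jap p.1 ^ k * pdA β f p.1 p.2) μVX) :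
    ∫ x in box, ∫ v : V, jap v ^ k * |pdA β f v x| = (A k f β).toReal := by
  rw [A_eq h, ← integral_norm_eq_lintegral_enorm h.aestronglyMeasurable,
    integral_prod_symm _ h.norm]
  refine integral_congr_ae (Eventually.of_forall fun x => ?_)
  refine integral_congr_ae (Eventually.of_forall fun v => ?_)
  have : 0 ≤ jap v ^ k := Real.rpow_nonneg (by linarith [one_le_jap v]) k
  simp only [norm_mul, Real.norm_eq_abs, abs_of_nonneg this]

lemma weight_mono {k l : ℝ} (hkl : k ≤ l) {f : V → V → ℝ} {β : Fin 3 → ℕ}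
    (h : Integrable (fun p : V × V => jap p.1 ^ l * pdA β f p.1 p.2) μVX) :
    Integrable (fun p : V × V => jap p.1 ^ k * pdA β f p.1 p.2) μVX := by
  have hj : ∀ p : V × V, 0 < jap p.1 := fun p => by linarith [one_le_jap p.1]
  have hc : Measurable (fun p : V × V => jap p.1 ^ (k - l)) :=
    (jap_cont.measurable.comp measurable_fst).pow_const _
  have := h.bdd_mul (c := 1) hc.aestronglyMeasurable (Eventually.of_forall fun p => by
    rw [Real.norm_of_nonneg (Real.rpow_nonneg (hj p).le _)]
    exact Real.rpow_le_one_of_one_le_of_nonpos (one_le_jap _) (by linarith))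
  refine this.congr (Eventually.of_forall fun p => ?_)
  simp only
  rw [← mul_assoc, ← Real.rpow_add (hj p)]
  congr 2; ring

lemma JM_of_integrable {k : ℝ} {f : V → V → ℝ}
    (h : ∀ β : Fin 3 → ℕ, β 0 + β 1 + β 2 ≤ 8 →
      Integrable (fun p : V × V => jap p.1 ^ k * pdA β f p.1 p.2) μVX) : JM volume f := by
  intro β hβ
  have hj : ∀ p : V × V, 0 < jap p.1 := fun p => by linarith [one_le_jap p.1]
  have hc : Measurable (fun p : V × V => jap p.1 ^ (-k)) :=
    (jap_cont.measurable.comp measurable_fst).pow_const _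
  refine (hc.aestronglyMeasurable.mul (h β hβ).aestronglyMeasurable).congr
    (Eventually.of_forall fun p => ?_)
  simp only [Pi.mul_apply]
  rw [← mul_assoc, ← Real.rpow_add (hj p), pdA_eq]
  simp

lemma A_meas {f : V → V → ℝ} (hf : JM volume f) {k : ℝ} {β : Fin 3 → ℕ}
    (hβ : β 0 + β 1 + β 2 ≤ 8) :
    AEMeasurable (fun v => W k v * ∫⁻ x in box, ‖DA β (f v) x‖ₑ) volume :=
  (W_meas k).aemeasurable.mul (hf β hβ).enorm.lintegral_prod_right'

lemma sum_A {f : V → V → ℝ} (hf : JM volume f) (k : ℝ) :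
    ∫⁻ v, W k v * NF (f v) = ∑ β : Fin 3 → Fin 9,
      if (β 0 : ℕ) + (β 1 : ℕ) + (β 2 : ℕ) ≤ 8 then A k f (fun i => (β i : ℕ)) else 0 := by
  simp only [NF, Finset.mul_sum]
  rw [lintegral_finsetSum']
  · refine Finset.sum_congr rfl fun β _ => ?_
    split_ifs with h
    · rfl
    · simp
  · intro β _
    split_ifs with h
    · exact A_meas hf h
    · simp

lemma sum_A_ne_top {f : V → V → ℝ} {k : ℝ} (hf : JM volume f)
    (h : ∀ β : Fin 3 → ℕ, β 0 + β 1 + β 2 ≤ 8 →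
      Integrable (fun p : V × V => jap p.1 ^ k * pdA β f p.1 p.2) μVX) :
    ∫⁻ v, W k v * NF (f v) ≠ ⊤ := by
  rw [sum_A hf]
  refine (ENNReal.sum_lt_top.2 fun β _ => ?_).ne
  split_ifs with hβ
  · exact (A_ne_top (h _ hβ)).lt_top
  · simp

lemma sum_A_toReal {f : V → V → ℝ} {k : ℝ} (hf : JM volume f)
    (h : ∀ β : Fin 3 → ℕ, β 0 + β 1 + β 2 ≤ 8 →
      Integrable (fun p : V × V => jap p.1 ^ k * pdA β f p.1 p.2) μVX) :
    (∫⁻ v, W k v * NF (f v)).toReal =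
      msum 8 (fun β => ∫ x in box, ∫ v : V, jap v ^ k * |pdA β f v x|) := by
  rw [sum_A hf, ENNReal.toReal_sum]
  · refine Finset.sum_congr rfl fun β _ => ?_
    split_ifs with hβ
    · exact (A_toReal (h _ hβ)).symm
    · simp
  · intro β _
    split_ifs with hβ
    · exact A_ne_top (h _ hβ)
    · simp

lemma msum_mul_add (N : ℕ) (a b c d : (Fin 3 → ℕ) → ℝ) :
    msum N (fun β₁ => msum N (fun β₂ => a β₁ * b β₂ + c β₁ * d β₂)) =
      msum N a * msum N b + msum N c * msum N d := by
  simp only [msum, Finset.sum_mul_sum, ← Finset.sum_add_distrib]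
  refine Finset.sum_congr rfl fun β₁ _ => ?_
  split_ifs with h1
  · refine Finset.sum_congr rfl fun β₂ _ => ?_
    split_ifs <;> simp
  · simp

/-- weighted `L¹(ℝ³×𝕋³)` bound for `∂ₓ^α Q(f,g)`. -/
theorem stmt_8 :
    ∀ m : ℝ, 0 ≤ m → ∃ C > 0, ∀ α : Fin 3 → ℕ, α 0 + α 1 + α 2 ≤ 8 →
      ∀ f g : V → V → ℝ,
        (∀ v : V, ContDiff ℝ (⊤ : ℕ∞) (f v)) → (∀ v : V, ContDiff ℝ (⊤ : ℕ∞) (g v)) →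
        PeriodicX f → PeriodicX g →
        (∀ β : Fin 3 → ℕ, β 0 + β 1 + β 2 ≤ 8 →
          Integrable (fun p : V × V => jap p.1 ^ (m + 1) * pdA β f p.1 p.2)
            ((volume : Measure V).prod (volume.restrict box)) ∧
          Integrable (fun p : V × V => jap p.1 ^ (m + 1) * pdA β g p.1 p.2)
            ((volume : Measure V).prod (volume.restrict box))) →
        Integrable (fun p : V × V => jap p.1 ^ m * pdA α (QopX f g) p.1 p.2)
          ((volume : Measure V).prod (volume.restrict box)) →
        ∫ x in box, ∫ v : V, jap v ^ m * |pdA α (QopX f g) v x| ≤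
          C * msum 8 (fun β₁ => msum 8 (fun β₂ =>
            (∫ x in box, ∫ v : V, jap v ^ (m + 1) * |pdA β₁ f v x|)
              * (∫ x in box, ∫ v : V, |pdA β₂ g v x|)
            + (∫ x in box, ∫ v : V, jap v ^ (m + 1) * |pdA β₁ g v x|)
              * (∫ x in box, ∫ v : V, |pdA β₂ f v x|))) := by
  intro m hm
  obtain ⟨C, hCdef⟩ : ∃ C : ENNReal, C = 702464 * 2 * ENNReal.ofReal (2 ^ (m + 1)) * σS Set.univ := ⟨_, rfl⟩
  refine ⟨C.toReal + 1, by positivity, ?_⟩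
  intro α hα f g sf sg _ _ hfg hQ
  have hf := fun β hβ => (hfg β hβ).1
  have hg := fun β hβ => (hfg β hβ).2
  have jf : JM volume f := JM_of_integrable hf
  have jg : JM volume g := JM_of_integrable hg
  have hf0 := fun β hβ => weight_mono (k := 0) (by linarith : (0 : ℝ) ≤ m + 1) (hf β hβ)
  have hg0 := fun β hβ => weight_mono (k := 0) (by linarith : (0 : ℝ) ≤ m + 1) (hg β hβ)
  have tf := sum_A_ne_top jf hf
  have tg := sum_A_ne_top jg hg
  have tf0 := sum_A_ne_top jf hf0
  have tg0 := sum_A_ne_top jg hg0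
  have rf := sum_A_toReal jf hf
  have rg := sum_A_toReal jg hg
  have rf0 := sum_A_toReal jf hf0
  have rg0 := sum_A_toReal jg hg0
  have key := main_enn sf sg hm jf jg tf tg hα
  rw [← hCdef] at key
  have e0 : ∀ v, W 0 v = 1 := fun v => by simp [W]
  simp only [e0, one_mul, Real.rpow_zero] at tf0 tg0 rf0 rg0
  rw [A_toReal hQ, msum_mul_add, ← rf, ← rg, ← rf0, ← rg0]
  have hC : C ≠ ⊤ := hCdef ▸ ENNReal.mul_ne_top (ENNReal.mul_ne_top (by norm_num) ENNReal.ofReal_ne_top)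
      (measure_ne_top _ _)
  have t1 := ENNReal.mul_ne_top tf tg0
  have t2 := ENNReal.mul_ne_top tg tf0
  have h2 := ENNReal.toReal_mono (ENNReal.mul_ne_top hC (ENNReal.add_ne_top.2 ⟨t1, t2⟩)) key
  rw [ENNReal.toReal_mul, ENNReal.toReal_add t1 t2, ENNReal.toReal_mul, ENNReal.toReal_mul] at h2
  refine h2.trans ?_
  gcongr
  linarith
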